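/- arXiv:2508.03880 — 2 statements merged into one kernel-verified Lean document; each statement's English description precedes it below -/
import Mathlib

section
/- There exists a constant C = C(n) such that for every 1 ≤ p ≤ ∞, every f ∈ W^{1,p}(ℝⁿ), every α ∈ (0,∞), every r ∈ (0,∞), and every x ∈ ℝⁿ with M|∇f|(x) ≤ α at which the limit f*(x) = lim_{δ→0⁺} ⨍_{B(x,δ)} f(y) dy exists and is finite, one has |f*(x) − f_{B(x,r)}| ≤ C r α, where f_{B(x,r)} := ⨍_{B(x,r)} f(y) dy. -/
open MeasureTheory Filter Metric Set
open scoped ENNReal NNReal Topology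

noncomputable section

abbrev Euc (n : ℕ) := EuclideanSpace ℝ (Fin n)

/-- Degree of a multi-index. -/
def mdeg {n : ℕ} (α : Fin n → ℕ) : ℕ := ∑ i, α i

/-- Iterated partial derivative along a list of coordinate directions. -/
def listDeriv {n : ℕ} : List (Fin n) → (Euc n → ℝ) → (Euc n → ℝ)
  | [], η => η
  | i :: l, η => fun x => fderiv ℝ (listDeriv l η) x (EuclideanSpace.single i 1)

/-- The partial derivative `D^α η` associated to a multi-index `α`. -/
def mderiv {n : ℕ} (α : Fin n → ℕ) (η : Euc n → ℝ) : Euc n → ℝ :=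
  listDeriv ((List.finRange n).flatMap fun i => List.replicate (α i) i) η

/-- `g` is the weak derivative `D^α f` on `ℝⁿ`. -/
def IsWeakDeriv {n : ℕ} (α : Fin n → ℕ) (f g : Euc n → ℝ) : Prop :=
  ∀ η : Euc n → ℝ, ContDiff ℝ (⊤ : ℕ∞) η → HasCompactSupport η →
    ∫ x, f x * mderiv α η x = (-1 : ℝ) ^ mdeg α * ∫ x, g x * η x

/-- `g` is the weak derivative `D^α f` on an open set `U`. -/
def IsWeakDerivOn {n : ℕ} (U : Set (Euc n)) (α : Fin n → ℕ) (f g : Euc n → ℝ) : Prop :=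
  ∀ η : Euc n → ℝ, ContDiff ℝ (⊤ : ℕ∞) η → HasCompactSupport η → tsupport η ⊆ U →
    ∫ x in U, f x * mderiv α η x = (-1 : ℝ) ^ mdeg α * ∫ x in U, g x * η x

/-- Membership in the Sobolev space `W^{k,p}(U)`. -/
def MemSobolevOn {n : ℕ} (k : ℕ) (p : ℝ) (U : Set (Euc n)) (f : Euc n → ℝ) : Prop :=
  MemLp f (ENNReal.ofReal p) (volume.restrict U) ∧
  ∀ α : Fin n → ℕ, mdeg α ≤ k → ∃ g : Euc n → ℝ,
    MemLp g (ENNReal.ofReal p) (volume.restrict U) ∧ IsWeakDerivOn U α f g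

/-- Membership in the local Sobolev space `W^{k,p}_loc(Ω)`. -/
def MemSobolevLoc {n : ℕ} (k : ℕ) (p : ℝ) (Ω : Set (Euc n)) (f : Euc n → ℝ) : Prop :=
  ∀ U : Set (Euc n), IsOpen U → Bornology.IsBounded U → closure U ⊆ Ω →
    MemSobolevOn k p U f

/-- The normalizing constant `γ(a)` of the Riesz kernel. -/
def rieszGamma (n : ℕ) (a : ℝ) : ℝ :=
  Real.pi ^ ((n : ℝ) / 2) * (2 : ℝ) ^ a * Real.Gamma (a / 2) / Real.Gamma (((n : ℝ) - a) / 2)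

/-- The Riesz potential `I_a * g`, valued in `ℝ≥0∞`. -/
def rieszPot {n : ℕ} (a : ℝ) (g : Euc n → ℝ) (x : Euc n) : ℝ≥0∞ :=
  (ENNReal.ofReal (rieszGamma n a))⁻¹ *
    ∫⁻ y, ENNReal.ofReal (g y) * ENNReal.ofReal (‖x - y‖ ^ (a - (n : ℝ)))

/-- The Riesz capacity `R_{a,p}`. -/
def rieszCap {n : ℕ} (a p : ℝ) (S : Set (Euc n)) : ℝ≥0∞ :=
  ⨅ (g : Euc n → ℝ) (_ : MemLp g (ENNReal.ofReal p) volume ∧ (∀ x, 0 ≤ g x) ∧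
      ∀ x ∈ S, 1 ≤ rieszPot a g x),
    ∫⁻ y, ENNReal.ofReal (g y) ^ p

/-- The precise representative of a (vector-valued) locally integrable function. -/
def preciseRepV {n : ℕ} {F : Type*} [NormedAddCommGroup F] [NormedSpace ℝ F]
    (f : Euc n → F) (x : Euc n) : F :=
  letI := Classical.propDecidable
  if h : ∃ L : F, Tendsto (fun ε : ℝ => ⨍ y in ball x ε, f y) (𝓝[>] (0:ℝ)) (𝓝 L)
  then h.choose else 0

/-- The precise representative of a real-valued locally integrable function. -/
def preciseRep {n : ℕ} (f : Euc n → ℝ) (x : Euc n) : ℝ := preciseRepV f x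

/-- The Hardy–Littlewood maximal function (of an `ℝ≥0∞`-valued integrand). -/
def maxFn {n : ℕ} (g : Euc n → ℝ≥0∞) (x : Euc n) : ℝ≥0∞ :=
  ⨆ (r : ℝ) (_ : 0 < r), (volume (ball x r))⁻¹ * ∫⁻ y in ball x r, g y

/-- `x` is a density point of `S`. -/
def DensityPt {n : ℕ} (S : Set (Euc n)) (x : Euc n) : Prop :=
  Tendsto (fun r : ℝ => volume (S ∩ ball x r) / volume (ball x r)) (𝓝[>] (0:ℝ)) (𝓝 1)

/-- `L` is the approximate differential of `φ` at `x₀`, relative to the domain `A`. -/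
def HasApproxDerivAt {n : ℕ} (A : Set (Euc n)) (φ : Euc n → Euc n)
    (L : Euc n →L[ℝ] Euc n) (x₀ : Euc n) : Prop :=
  DensityPt A x₀ ∧ ∀ ε : ℝ, 0 < ε →
    DensityPt {x | x ∈ A ∧ ‖φ x - φ x₀ - L (x - x₀)‖ ≤ ε * ‖x - x₀‖} x₀

end

/-- `g` is the weak gradient of `f`. -/
def IsWeakGradient {n : ℕ} (f : Euc n → ℝ) (g : Euc n → Euc n) : Prop :=
  ∀ i : Fin n, IsWeakDeriv (Pi.single i 1) f
    (fun x => (inner ℝ (g x) (EuclideanSpace.single i 1) : ℝ))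

/-! Let `ψ` be a bump function supported in the unit ball and let `K t y = t⁻ⁿ ψ((y - x) / t)`.
Since `tⁿ K t y` only depends on `(y - x) / t`, Euler's identity for homogeneous functions reads
`∂ₜ K = -t⁻¹ div (K (y - x))`. Testing the weak gradient `g` of `f` against the vector field
`K t y • (y - x)` therefore shows that `t ↦ ∫ K t f` has derivative `t⁻¹ ∫ K t y ⟪y - x, g y⟫ dy`,
which is at most the integral of `‖g‖` over `ball x t` divided by `tⁿ`. So these weighted averages
are Lipschitz in `t`; letting `ψ` tend to the indicator of the unit ball, the ball averages of
`f` are Lipschitz too, with constant `α`. -/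

section MultiIndex

variable {n : ℕ}

theorem flatMap_replicate_single {ι : Type*} [DecidableEq ι] (i : ι) (l : List ι) :
    l.flatMap (fun j ↦ List.replicate ((Pi.single i 1 : ι → ℕ) j) j) =
      List.replicate (l.count i) i := by
  induction l with
  | nil => rfl
  | cons j l ih =>
    obtain rfl | hij := eq_or_ne j i
    · simp [ih, List.replicate_succ]
    · simp [ih, hij]

theorem mderiv_single_one (i : Fin n) (η : Euc n → ℝ) :
    mderiv (Pi.single i 1) η = fun x ↦ fderiv ℝ η x (EuclideanSpace.single i 1) := by
  rw [mderiv, flatMap_replicate_single,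
    List.count_eq_one_of_mem (List.nodup_finRange n) (List.mem_finRange i)]
  rfl

theorem mdeg_single (i : Fin n) (k : ℕ) : mdeg (Pi.single i k) = k := by
  simp [mdeg]

end MultiIndex

section Divergence

/-- The divergence of a vector field: the trace of its Fréchet derivative. -/
noncomputable def divergence {E : Type*} [NormedAddCommGroup E] [NormedSpace ℝ E] (V : E → E)
    (y : E) : ℝ :=
  LinearMap.trace ℝ E (fderiv ℝ V y)

theorem divergence_smul_sub {E : Type*} [NormedAddCommGroup E] [NormedSpace ℝ E]
    [FiniteDimensional ℝ E] {φ : E → ℝ} {y : E} (hφ : DifferentiableAt ℝ φ y) (x : E) :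
    divergence (fun z ↦ φ z • (z - x)) y =
      Module.finrank ℝ E * φ y + fderiv ℝ φ y (y - x) := by
  have hV : fderiv ℝ (fun z ↦ φ z • (z - x)) y =
      φ y • ContinuousLinearMap.id ℝ E + (fderiv ℝ φ y).smulRight (y - x) :=
    (hφ.hasFDerivAt.smul ((hasFDerivAt_id y).sub_const x)).fderiv
  simp [divergence, hV, mul_comm]

variable {n : ℕ}

theorem divergence_eq_sum_fderiv_apply {V : Euc n → Euc n} {y : Euc n}
    (hV : DifferentiableAt ℝ V y) :
    divergence V y = ∑ i, fderiv ℝ (fun z ↦ V z i) y (EuclideanSpace.single i 1) := by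
  have hcoord (i : Fin n) : fderiv ℝ (fun z ↦ V z i) y =
      (EuclideanSpace.proj i : Euc n →L[ℝ] ℝ).comp (fderiv ℝ V y) :=
    ((EuclideanSpace.proj i : Euc n →L[ℝ] ℝ).hasFDerivAt.comp y hV.hasFDerivAt).fderiv
  rw [divergence, LinearMap.trace_eq_sum_inner _ (EuclideanSpace.basisFun (Fin n) ℝ)]
  simp [hcoord, EuclideanSpace.inner_single_left]

namespace IsWeakGradient

variable {f : Euc n → ℝ} {g : Euc n → Euc n}

theorem integral_fderiv_single_mul (h : IsWeakGradient f g) (i : Fin n) {η : Euc n → ℝ}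
    (hη : ContDiff ℝ (⊤ : ℕ∞) η) (hη' : HasCompactSupport η) :
    ∫ y, fderiv ℝ η y (EuclideanSpace.single i 1) * f y = -∫ y, η y * g y i := by
  simpa [mderiv_single_one, mdeg_single, EuclideanSpace.inner_single_right, mul_comm]
    using h i η hη hη'

theorem integral_divergence_mul (h : IsWeakGradient f g) (hf : LocallyIntegrable f)
    (hg : LocallyIntegrable g) {V : Euc n → Euc n} (hV : ContDiff ℝ (⊤ : ℕ∞) V)
    (hV' : HasCompactSupport V) :
    ∫ y, divergence V y * f y = -∫ y, inner ℝ (V y) (g y) := by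
  have hVi (i : Fin n) : ContDiff ℝ (⊤ : ℕ∞) (fun y ↦ V y i) := contDiff_euclidean.1 hV i
  have hVi' (i : Fin n) : HasCompactSupport (fun y ↦ V y i) :=
    hV'.comp_left (g := fun v : Euc n ↦ v i) rfl
  have hfint (i : Fin n) :
      Integrable fun y ↦ fderiv ℝ (fun z ↦ V z i) y (EuclideanSpace.single i 1) * f y :=
    hf.integrable_smul_left_of_hasCompactSupport
      (((hVi i).continuous_fderiv (by simp)).clm_apply continuous_const)
      ((hVi' i).fderiv_apply (𝕜 := ℝ) _)
  have hgint (i : Fin n) : Integrable fun y ↦ V y i * g y i := by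
    simpa using (EuclideanSpace.proj i : Euc n →L[ℝ] ℝ).integrable_comp
      (hg.integrable_smul_left_of_hasCompactSupport (hVi i).continuous (hVi' i))
  calc
    ∫ y, divergence V y * f y
        = ∑ i, ∫ y, fderiv ℝ (fun z ↦ V z i) y (EuclideanSpace.single i 1) * f y := by
      simp_rw [divergence_eq_sum_fderiv_apply (hV.differentiable (by simp) _), Finset.sum_mul]
      exact integral_finsetSum _ fun i _ ↦ hfint i
    _ = ∑ i, -∫ y, V y i * g y i :=
      Finset.sum_congr rfl fun i _ ↦ h.integral_fderiv_single_mul i (hVi i) (hVi' i)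
    _ = -∫ y, inner ℝ (V y) (g y) := by
      rw [Finset.sum_neg_distrib, ← integral_finsetSum _ fun i _ ↦ hgint i]
      simp [PiLp.inner_apply, mul_comm]

end IsWeakGradient

end Divergence

section ParametricIntegral

variable {E F : Type*} [NormedAddCommGroup E] [NormedSpace ℝ E] [NormedAddCommGroup F]
  [NormedSpace ℝ F]

theorem hasDerivAt_of_differentiableAt_uncurry {K : ℝ → E → F} {s : ℝ} {y : E}
    (hK : DifferentiableAt ℝ (Function.uncurry K) (s, y)) :
    HasDerivAt (K · y) (fderiv ℝ (Function.uncurry K) (s, y) (1, 0)) s :=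
  hK.hasFDerivAt.comp_hasDerivAt (f := fun s' ↦ (s', y)) s
    ((hasDerivAt_id' s).prodMk (hasDerivAt_const s y))

theorem continuousOn_deriv_of_contDiffOn_uncurry {K : ℝ → E → F} {U : Set ℝ} (hU : IsOpen U)
    (hK : ContDiffOn ℝ 1 (Function.uncurry K) (U ×ˢ univ)) :
    ContinuousOn (fun q : ℝ × E ↦ deriv (K · q.2) q.1) (U ×ˢ univ) := by
  have hopen : IsOpen (U ×ˢ (univ : Set E)) := hU.prod isOpen_univ
  have hfderiv : ContinuousOn (fun q ↦ fderiv ℝ (Function.uncurry K) q (1, 0)) (U ×ˢ univ) :=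
    (hK.continuousOn_fderiv_of_isOpen hopen le_rfl).clm_apply continuousOn_const
  exact hfderiv.congr fun q hq ↦ (hasDerivAt_of_differentiableAt_uncurry
    ((hK.contDiffAt (hopen.mem_nhds hq)).differentiableAt one_ne_zero)).deriv

variable [MeasurableSpace E] [OpensMeasurableSpace E]

theorem hasDerivAt_setIntegral_smul_of_contDiffOn {μ : Measure E} {f : E → F} {K : ℝ → E → ℝ}
    {U : Set ℝ} {k : Set E} {t : ℝ} (hU : IsOpen U) (ht : t ∈ U) (hk : IsCompact k)
    (hf : IntegrableOn f k μ) (hK : ContDiffOn ℝ 1 (Function.uncurry K) (U ×ˢ univ)) :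
    HasDerivAt (fun s ↦ ∫ y in k, K s y • f y ∂μ) (∫ y in k, deriv (K · y) t • f y ∂μ) t := by
  obtain ⟨ε, hε, hεU⟩ := nhds_basis_closedBall.mem_iff.1 (hU.mem_nhds ht)
  have hK_cont (s : ℝ) (hs : s ∈ U) : Continuous (K s) :=
    hK.continuousOn.comp_continuous (Continuous.prodMk_right s) fun _ ↦ ⟨hs, mem_univ _⟩
  have hK'_cont := continuousOn_deriv_of_contDiffOn_uncurry hU hK
  obtain ⟨M, hM⟩ := ((isCompact_closedBall t ε).prod hk).exists_bound_of_continuousOn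
    (hK'_cont.mono (prod_mono hεU (subset_univ k)))
  refine (hasDerivAt_integral_of_dominated_loc_of_deriv_le (F := fun s y ↦ K s y • f y)
    (F' := fun s y ↦ deriv (K · y) s • f y) (bound := fun y ↦ M * ‖f y‖) (ball_mem_nhds t hε)
    ?_ ?_ ?_ ?_ (hf.norm.const_mul M) ?_).2
  · filter_upwards [hU.mem_nhds ht] with s hs
    exact (hK_cont s hs).aestronglyMeasurable.smul hf.aestronglyMeasurable
  · exact hf.continuousOn_smul (hK_cont t ht).continuousOn hk
  · have hK't_cont : Continuous fun y ↦ deriv (K · y) t :=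
      hK'_cont.comp_continuous (Continuous.prodMk_right t) fun _ ↦ ⟨ht, mem_univ _⟩
    exact hK't_cont.aestronglyMeasurable.smul hf.aestronglyMeasurable
  · refine ae_restrict_of_forall_mem hk.measurableSet fun y hy s hs ↦ ?_
    rw [norm_smul]
    exact mul_le_mul_of_nonneg_right (hM (s, y) ⟨ball_subset_closedBall hs, hy⟩) (norm_nonneg _)
  · refine Eventually.of_forall fun y s hs ↦ HasDerivAt.smul_const ?_ (f y)
    have hsy : U ×ˢ univ ∈ 𝓝 (s, y) :=
      (hU.prod isOpen_univ).mem_nhds ⟨hεU (ball_subset_closedBall hs), mem_univ y⟩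
    exact (hasDerivAt_of_differentiableAt_uncurry
      ((hK.contDiffAt hsy).differentiableAt one_ne_zero)).differentiableAt.hasDerivAt

theorem hasDerivAt_integral_smul_of_contDiffOn {μ : Measure E} {f : E → F} {K : ℝ → E → ℝ}
    {U : Set ℝ} {k : Set E} {t : ℝ} (hU : IsOpen U) (ht : t ∈ U) (hk : IsCompact k)
    (hf : IntegrableOn f k μ) (hK : ContDiffOn ℝ 1 (Function.uncurry K) (U ×ˢ univ))
    (hKk : ∀ s ∈ U, Function.support (K s) ⊆ k) :
    HasDerivAt (fun s ↦ ∫ y, K s y • f y ∂μ) (∫ y, deriv (K · y) t • f y ∂μ) t := by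
  have hK_zero (s : ℝ) (hs : s ∈ U) (y : E) (hy : y ∉ k) : K s y = 0 :=
    Function.notMem_support.1 fun h ↦ hy (hKk s hs h)
  have hK'_zero (y : E) (hy : y ∉ k) : deriv (K · y) t = 0 := by
    have hzero : (K · y) =ᶠ[𝓝 t] fun _ ↦ 0 :=
      eventually_of_mem (hU.mem_nhds ht) fun s hs ↦ hK_zero s hs y hy
    rw [hzero.deriv_eq, deriv_const]
  have hK_int (s : ℝ) (hs : s ∈ U) : ∫ y in k, K s y • f y ∂μ = ∫ y, K s y • f y ∂μ :=
    setIntegral_eq_integral_of_forall_compl_eq_zero fun y hy ↦ by rw [hK_zero s hs y hy, zero_smul]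
  have hK'_int : ∫ y in k, deriv (K · y) t • f y ∂μ = ∫ y, deriv (K · y) t • f y ∂μ :=
    setIntegral_eq_integral_of_forall_compl_eq_zero fun y hy ↦ by rw [hK'_zero y hy, zero_smul]
  rw [← hK'_int]
  exact (hasDerivAt_setIntegral_smul_of_contDiffOn hU ht hk hf hK).congr_of_eventuallyEq
    (eventually_of_mem (hU.mem_nhds ht) fun s hs ↦ (hK_int s hs).symm)

end ParametricIntegral

section Dilation

variable {E F : Type*} [NormedAddCommGroup E] [NormedSpace ℝ E] [AddCommGroup F] [Module ℝ F]

/-- The function `ψ` transported from the unit ball to `ball x t`, normalised so that its integral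
does not depend on `t`. -/
noncomputable def dilation (ψ : E → ℝ) (x : E) (t : ℝ) (y : E) : ℝ :=
  (t ^ Module.finrank ℝ E)⁻¹ * ψ (t⁻¹ • (y - x))

variable {ψ : E → ℝ} {x y : E} {t : ℝ}

theorem inv_smul_sub_mem_ball_zero_one (ht : 0 < t) :
    t⁻¹ • (y - x) ∈ ball (0 : E) 1 ↔ y ∈ ball x t := by
  rw [mem_ball_zero_iff, norm_smul, norm_inv, Real.norm_of_nonneg ht.le, inv_mul_lt_iff₀ ht,
    mul_one, mem_ball_iff_norm]

theorem support_dilation_subset (hψ : Function.support ψ ⊆ ball 0 1) (ht : 0 < t) :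
    Function.support (dilation ψ x t) ⊆ ball x t := fun _ hy ↦
  (inv_smul_sub_mem_ball_zero_one ht).1 (hψ (right_ne_zero_of_mul hy))

theorem dilation_indicator_ball (ht : 0 < t) :
    dilation ((ball (0 : E) 1).indicator 1) x t =
      (ball x t).indicator fun _ ↦ (t ^ Module.finrank ℝ E)⁻¹ := by
  ext y
  by_cases hy : y ∈ ball x t
  · simp [dilation, hy, (inv_smul_sub_mem_ball_zero_one ht).2 hy]
  · simp [dilation, hy, mt (inv_smul_sub_mem_ball_zero_one ht).1 hy]

theorem dilation_indicator_ball_smul (f : E → F) (ht : 0 < t) :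
    (fun y ↦ dilation ((ball (0 : E) 1).indicator 1) x t y • f y) =
      (ball x t).indicator fun y ↦ (t ^ Module.finrank ℝ E)⁻¹ • f y := by
  simp only [dilation_indicator_ball ht, indicator_smul_left]

theorem contDiffOn_uncurry_dilation {m : WithTop ℕ∞} (hψ : ContDiff ℝ m ψ) (x : E) :
    ContDiffOn ℝ m (Function.uncurry (dilation ψ x)) (Ioi 0 ×ˢ univ) := by
  have hinv : ContDiffOn ℝ m (fun q : ℝ × E ↦ q.1⁻¹) (Ioi 0 ×ˢ univ) :=
    contDiffOn_fst.inv fun q hq ↦ (mem_Ioi.1 hq.1).ne'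
  have harg : ContDiffOn ℝ m (fun q : ℝ × E ↦ q.1⁻¹ • (q.2 - x)) (Ioi 0 ×ˢ univ) :=
    hinv.smul (contDiffOn_snd.sub contDiffOn_const)
  simpa [Function.uncurry_def, dilation] using
    (hinv.pow (Module.finrank ℝ E)).mul (hψ.comp_contDiffOn harg)

theorem contDiff_dilation {m : WithTop ℕ∞} (hψ : ContDiff ℝ m ψ) (x : E) (t : ℝ) :
    ContDiff ℝ m (dilation ψ x t) := by
  unfold dilation
  fun_prop

theorem fderiv_dilation (hψ : Differentiable ℝ ψ) (x : E) (t : ℝ) (y v : E) :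
    fderiv ℝ (dilation ψ x t) y v =
      (t ^ Module.finrank ℝ E)⁻¹ * (t⁻¹ * fderiv ℝ ψ (t⁻¹ • (y - x)) v) := by
  have harg : HasFDerivAt (fun z : E ↦ t⁻¹ • (z - x)) (t⁻¹ • ContinuousLinearMap.id ℝ E) y :=
    ((hasFDerivAt_id y).sub_const x).const_smul t⁻¹
  have hdil : HasFDerivAt (dilation ψ x t) _ y :=
    ((hψ _).hasFDerivAt.comp y harg).const_mul (t ^ Module.finrank ℝ E)⁻¹
  simp [hdil.fderiv]

theorem hasDerivAt_dilation [FiniteDimensional ℝ E] (hψ : Differentiable ℝ ψ) (ht : t ≠ 0) :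
    HasDerivAt (fun s ↦ dilation ψ x s y)
      (-t⁻¹ * divergence (fun z ↦ dilation ψ x t z • (z - x)) y) t := by
  have hpow : HasDerivAt (fun s : ℝ ↦ (s ^ Module.finrank ℝ E)⁻¹)
      (-t⁻¹ * (Module.finrank ℝ E * (t ^ Module.finrank ℝ E)⁻¹)) t := by
    have hzpow := hasDerivAt_zpow (-(Module.finrank ℝ E : ℤ)) t (.inl ht)
    simp only [zpow_sub_one₀ ht, zpow_neg, zpow_natCast, Int.cast_neg, Int.cast_natCast] at hzpow
    exact hzpow.congr_deriv (by ring)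
  have harg : HasDerivAt (fun s : ℝ ↦ s⁻¹ • (y - x)) (-(t ^ 2)⁻¹ • (y - x)) t :=
    (hasDerivAt_inv ht).smul_const _
  refine (hpow.mul ((hψ _).hasFDerivAt.comp_hasDerivAt t harg)).congr_deriv ?_
  have hdil : Differentiable ℝ (dilation ψ x t) := by unfold dilation; fun_prop
  rw [divergence_smul_sub (hdil y), fderiv_dilation hψ, dilation, map_smul, smul_eq_mul]
  simp only [Function.comp_apply]
  ring

theorem abs_dilation_le {χ : E → ℝ} (h : ∀ z, |ψ z| ≤ χ z) (ht : 0 ≤ t) :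
    |dilation ψ x t y| ≤ dilation χ x t y := by
  rw [dilation, abs_mul, abs_of_nonneg (by positivity)]
  exact mul_le_mul_of_nonneg_left (h _) (by positivity)

theorem support_subset_of_abs_le_indicator {ι : Type*} {φ : ι → ℝ} {s : Set ι}
    (h : ∀ z, |φ z| ≤ s.indicator 1 z) : Function.support φ ⊆ s := by
  intro z hz
  by_contra hzs
  exact hz (by simpa [hzs] using h z)

end Dilation

section Ball

theorem exists_seq_contDiff_tendsto_indicator_ball {E : Type*} [NormedAddCommGroup E]
    [NormedSpace ℝ E] [HasContDiffBump E] (c : E) {r : ℝ} (hr : 0 < r) :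
    ∃ ψ : ℕ → E → ℝ, (∀ k, ContDiff ℝ (⊤ : ℕ∞) (ψ k)) ∧
      (∀ k z, |ψ k z| ≤ (ball c r).indicator 1 z) ∧
      ∀ z, Tendsto (ψ · z) atTop (𝓝 ((ball c r).indicator 1 z)) := by
  obtain ⟨u, -, hu, hu_lim⟩ := exists_seq_strictMono_tendsto' hr
  let ψ (k : ℕ) : ContDiffBump c := ⟨u k, r, (hu k).1, (hu k).2⟩
  have hψ_zero (k : ℕ) (z : E) (hz : z ∉ ball c r) : ψ k z = 0 :=
    (ψ k).zero_of_le_dist (not_lt.1 hz)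
  refine ⟨fun k ↦ ψ k, fun k ↦ (ψ k).contDiff, fun k z ↦ ?_, fun z ↦ ?_⟩
  · by_cases hz : z ∈ ball c r
    · simpa [hz, abs_of_nonneg (ψ k).nonneg] using (ψ k).le_one
    · simp [hz, hψ_zero k z hz]
  · by_cases hz : z ∈ ball c r
    · rw [indicator_of_mem hz]
      refine tendsto_const_nhds.congr' ?_
      filter_upwards [hu_lim.eventually_const_lt (mem_ball.1 hz)] with k hk
      exact ((ψ k).one_of_mem_closedBall hk.le).symm
    · simp [hz, hψ_zero _ z hz]

variable {X : Type*} [PseudoMetricSpace X] [ProperSpace X] [MeasurableSpace X] {μ : Measure X}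

theorem measureReal_ball_pos [μ.IsOpenPosMeasure] [IsFiniteMeasureOnCompacts μ] (x : X) {t : ℝ}
    (ht : 0 < t) : 0 < μ.real (ball x t) :=
  ENNReal.toReal_pos (measure_ball_pos μ x ht).ne' measure_ball_lt_top.ne

theorem integrableOn_ball_of_locallyIntegrable {F : Type*} [NormedAddCommGroup F] {f : X → F}
    (hf : LocallyIntegrable f μ) (x : X) (t : ℝ) : IntegrableOn f (ball x t) μ :=
  (hf.integrableOn_isCompact (isCompact_closedBall x t)).mono_set ball_subset_closedBall

end Ball

section BallAverage

variable {E F : Type*} [NormedAddCommGroup E] [NormedSpace ℝ E] [MeasurableSpace E]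
  [BorelSpace E] {μ : Measure E} [NormedAddCommGroup F] [NormedSpace ℝ F] {f : E → F} {x : E}
  {t : ℝ}

theorem integrable_dilation_indicator_ball_smul (hf : IntegrableOn f (ball x t) μ)
    (ht : 0 < t) :
    Integrable (fun y ↦ dilation ((ball (0 : E) 1).indicator 1) x t y • f y) μ := by
  rw [dilation_indicator_ball_smul _ ht, integrable_indicator_iff measurableSet_ball]
  exact hf.smul _

variable [FiniteDimensional ℝ E] [μ.IsAddHaarMeasure]

theorem integral_dilation_indicator_ball_smul (f : E → F) (x : E) (ht : 0 < t) :
    ∫ y, dilation ((ball (0 : E) 1).indicator 1) x t y • f y ∂μ =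
      μ.real (ball 0 1) • ⨍ y in ball x t, f y ∂μ := by
  have hvol : μ.real (ball x t) = t ^ Module.finrank ℝ E * μ.real (ball 0 1) := by
    rw [measureReal_def, Measure.addHaar_ball_of_pos μ x ht, ENNReal.toReal_mul,
      ENNReal.toReal_ofReal (by positivity), ← measureReal_def]
  have hpos : μ.real (ball (0 : E) 1) ≠ 0 := (measureReal_ball_pos 0 one_pos).ne'
  rw [dilation_indicator_ball_smul _ ht, integral_indicator measurableSet_ball, integral_smul,
    setAverage_eq, hvol, smul_smul]
  congr 1
  field_simp

theorem tendsto_integral_dilation_smul {ψ : ℕ → E → ℝ} (hψ : ∀ k, Continuous (ψ k))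
    (hψ_le : ∀ k z, |ψ k z| ≤ (ball 0 1).indicator 1 z)
    (hψ_lim : ∀ z, Tendsto (ψ · z) atTop (𝓝 ((ball 0 1).indicator 1 z)))
    (hf : LocallyIntegrable f μ) (x : E) (ht : 0 < t) :
    Tendsto (fun k ↦ ∫ y, dilation (ψ k) x t y • f y ∂μ) atTop
      (𝓝 (μ.real (ball 0 1) • ⨍ y in ball x t, f y ∂μ)) := by
  rw [← integral_dilation_indicator_ball_smul f x ht]
  refine tendsto_integral_of_dominated_convergence
    (fun y ↦ dilation ((ball (0 : E) 1).indicator 1) x t y • ‖f y‖) (fun k ↦ ?_)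
    (integrable_dilation_indicator_ball_smul
      (integrableOn_ball_of_locallyIntegrable hf x t).norm ht)
    (fun k ↦ .of_forall fun y ↦ ?_) (.of_forall fun y ↦ ?_)
  · have hcont : Continuous (dilation (ψ k) x t) := by have := hψ k; unfold dilation; fun_prop
    exact hcont.aestronglyMeasurable.smul hf.aestronglyMeasurable
  · rw [norm_smul]
    exact mul_le_mul_of_nonneg_right (abs_dilation_le (hψ_le k) ht.le) (norm_nonneg _)
  · exact ((hψ_lim _).const_mul _).smul_const _

end BallAverage

section WeakGradient

theorem abs_integral_dilation_mul_inner_le {E : Type*} [NormedAddCommGroup E]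
    [InnerProductSpace ℝ E] [FiniteDimensional ℝ E] [MeasurableSpace E] [BorelSpace E]
    {μ : Measure E} [μ.IsAddHaarMeasure] {g : E → E} {x : E} {t : ℝ}
    (hg : IntegrableOn g (ball x t) μ) {ψ : E → ℝ} (hψ : ∀ z, |ψ z| ≤ (ball 0 1).indicator 1 z)
    (ht : 0 < t) :
    |∫ y, dilation ψ x t y * inner ℝ (y - x) (g y) ∂μ| ≤
      t * (μ.real (ball 0 1) * ⨍ y in ball x t, ‖g y‖ ∂μ) := by
  have hint := integrable_dilation_indicator_ball_smul hg.norm ht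
  calc
    |∫ y, dilation ψ x t y * inner ℝ (y - x) (g y) ∂μ|
        ≤ ∫ y, t * (dilation ((ball 0 1).indicator 1) x t y * ‖g y‖) ∂μ := by
      rw [← Real.norm_eq_abs]
      refine norm_integral_le_of_norm_le (hint.const_mul t) (.of_forall fun y ↦ ?_)
      by_cases hy : y ∈ ball x t
      · have hinner : |inner ℝ (y - x) (g y)| ≤ t * ‖g y‖ := (abs_real_inner_le_norm _ _).trans
          (mul_le_mul_of_nonneg_right (mem_ball_iff_norm.1 hy).le (norm_nonneg _))
        rw [Real.norm_eq_abs, abs_mul, mul_left_comm]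
        exact mul_le_mul (abs_dilation_le hψ ht.le) hinner (abs_nonneg _)
          ((abs_nonneg _).trans (abs_dilation_le hψ ht.le))
      · have hzero : dilation ψ x t y = 0 := Function.notMem_support.1 fun h ↦
          hy (support_dilation_subset (support_subset_of_abs_le_indicator hψ) ht h)
        simp [hzero, dilation_indicator_ball ht, hy]
    _ = t * (μ.real (ball 0 1) * ⨍ y in ball x t, ‖g y‖ ∂μ) := by
      rw [integral_const_mul]
      exact congrArg (t * ·) (integral_dilation_indicator_ball_smul (fun y ↦ ‖g y‖) x ht)

variable {n : ℕ} {f : Euc n → ℝ} {g : Euc n → Euc n}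

namespace IsWeakGradient

theorem hasDerivAt_integral_dilation_mul (h : IsWeakGradient f g) (hf : LocallyIntegrable f)
    (hg : LocallyIntegrable g) {ψ : Euc n → ℝ} (hψ : ContDiff ℝ (⊤ : ℕ∞) ψ)
    (hψ' : Function.support ψ ⊆ ball 0 1) (x : Euc n) {t : ℝ} (ht : 0 < t) :
    HasDerivAt (fun s ↦ ∫ y, dilation ψ x s y * f y)
      (t⁻¹ * ∫ y, dilation ψ x t y * inner ℝ (y - x) (g y)) t := by
  have hV : ContDiff ℝ (⊤ : ℕ∞) fun y ↦ dilation ψ x t y • (y - x) :=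
    (contDiff_dilation hψ x t).smul (contDiff_id.sub contDiff_const)
  have hV' : HasCompactSupport fun y ↦ dilation ψ x t y • (y - x) :=
    (HasCompactSupport.of_support_subset_isCompact (isCompact_closedBall x t)
      ((support_dilation_subset hψ' ht).trans ball_subset_closedBall)).smul_right
  refine (hasDerivAt_integral_smul_of_contDiffOn (U := Ioo 0 (2 * t)) isOpen_Ioo
    ⟨ht, by linarith⟩ (isCompact_closedBall x (2 * t))
    (hf.integrableOn_isCompact (isCompact_closedBall x (2 * t)))
    ((contDiffOn_uncurry_dilation (hψ.of_le (by simp)) x).mono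
      (prod_mono Ioo_subset_Ioi_self subset_rfl))
    fun s hs ↦ (support_dilation_subset hψ' hs.1).trans
      (ball_subset_closedBall.trans (closedBall_subset_closedBall hs.2.le))).congr_deriv ?_
  calc
    ∫ y, deriv (fun s ↦ dilation ψ x s y) t * f y
        = -t⁻¹ * ∫ y, divergence (fun z ↦ dilation ψ x t z • (z - x)) y * f y := by
      simp_rw [(hasDerivAt_dilation (hψ.differentiable (by simp)) ht.ne').deriv, mul_assoc,
        integral_const_mul]
    _ = t⁻¹ * ∫ y, dilation ψ x t y * inner ℝ (y - x) (g y) := by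
      simp [h.integral_divergence_mul hf hg hV hV', real_inner_smul_left]

theorem abs_integral_dilation_mul_sub_le (h : IsWeakGradient f g) (hf : LocallyIntegrable f)
    (hg : LocallyIntegrable g) {ψ : Euc n → ℝ} (hψ : ContDiff ℝ (⊤ : ℕ∞) ψ)
    (hψ_le : ∀ z, |ψ z| ≤ (ball 0 1).indicator 1 z) {x : Euc n} {α r s : ℝ} (hr : 0 < r)
    (hs : 0 < s) (hα : ∀ t ∈ uIcc r s, ⨍ y in ball x t, ‖g y‖ ≤ α) :
    |(∫ y, dilation ψ x s y * f y) - ∫ y, dilation ψ x r y * f y| ≤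
      volume.real (ball (0 : Euc n) 1) * α * |s - r| := by
  have hpos (t : ℝ) (ht : t ∈ uIcc r s) : 0 < t := (lt_min hr hs).trans_le ht.1
  refine (convex_uIcc r s).norm_image_sub_le_of_norm_hasDerivWithin_le
    (fun t ht ↦ (h.hasDerivAt_integral_dilation_mul hf hg hψ
      (support_subset_of_abs_le_indicator hψ_le) x (hpos t ht)).hasDerivWithinAt)
    (fun t ht ↦ ?_) left_mem_uIcc right_mem_uIcc
  rw [norm_mul, norm_inv, Real.norm_of_nonneg (hpos t ht).le, inv_mul_le_iff₀ (hpos t ht)]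
  refine (abs_integral_dilation_mul_inner_le (integrableOn_ball_of_locallyIntegrable hg x t) hψ_le
    (hpos t ht)).trans ?_
  gcongr
  · exact (hpos t ht).le
  · exact hα t ht

theorem abs_setAverage_ball_sub_le (h : IsWeakGradient f g) (hf : LocallyIntegrable f)
    (hg : LocallyIntegrable g) {x : Euc n} {α r s : ℝ} (hr : 0 < r) (hs : 0 < s)
    (hα : ∀ t ∈ uIcc r s, ⨍ y in ball x t, ‖g y‖ ≤ α) :
    |(⨍ y in ball x s, f y) - ⨍ y in ball x r, f y| ≤ α * |s - r| := by
  obtain ⟨ψ, hψ, hψ_le, hψ_lim⟩ :=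
    exists_seq_contDiff_tendsto_indicator_ball (0 : Euc n) one_pos
  have hlim (t : ℝ) (ht : 0 < t) :=
    tendsto_integral_dilation_smul (fun k ↦ (hψ k).continuous) hψ_le hψ_lim hf x ht
  have hle := le_of_tendsto ((hlim s hs).sub (hlim r hr)).abs
    (.of_forall fun k ↦ h.abs_integral_dilation_mul_sub_le hf hg (hψ k) (hψ_le k) hr hs hα)
  have hvol : 0 < volume.real (ball (0 : Euc n) 1) :=
    measureReal_ball_pos 0 one_pos
  rw [← smul_sub, smul_eq_mul, abs_mul, abs_of_pos hvol, mul_assoc] at hle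
  exact le_of_mul_le_mul_left hle hvol

end IsWeakGradient

theorem setAverage_norm_le_of_maxFn_le {F : Type*} [NormedAddCommGroup F] {g : Euc n → F}
    {x : Euc n} {α t : ℝ} (hα : 0 ≤ α) (ht : 0 < t)
    (h : maxFn (fun y ↦ ENNReal.ofReal ‖g y‖) x ≤ ENNReal.ofReal α) :
    ⨍ y in ball x t, ‖g y‖ ≤ α := by
  have hball : ⨍⁻ y in ball x t, ENNReal.ofReal ‖g y‖ ∂volume ≤ ENNReal.ofReal α := by
    rw [setLAverage_eq, ENNReal.div_eq_inv_mul]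
    exact (iSup₂_le_iff.1 h) t ht
  calc
    ⨍ y in ball x t, ‖g y‖ ≤ (⨍⁻ y in ball x t, ENNReal.ofReal ‖g y‖ ∂volume).toReal := by
      simp_rw [setAverage_eq', setLAverage_eq']
      simpa only [norm_norm] using
        (Real.le_norm_self _).trans (norm_integral_le_lintegral_norm fun y ↦ ‖g y‖)
    _ ≤ α := ENNReal.toReal_le_of_le_ofReal hα hball

theorem abs_preciseRep_sub_average_le_general (hf : LocallyIntegrable f)
    (hg : LocallyIntegrable g) (h : IsWeakGradient f g) {α : ℝ} (hα : 0 ≤ α) {x : Euc n}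
    (hM : maxFn (fun y ↦ ENNReal.ofReal ‖g y‖) x ≤ ENNReal.ofReal α)
    (hlim : Tendsto (fun δ : ℝ ↦ ⨍ y in ball x δ, f y) (𝓝[>] 0) (𝓝 (preciseRep f x)))
    {r : ℝ} (hr : 0 < r) :
    |preciseRep f x - ⨍ y in ball x r, f y| ≤ r * α := by
  have hLip : ∀ᶠ s in 𝓝[>] 0,
      |(⨍ y in ball x s, f y) - ⨍ y in ball x r, f y| ≤ α * |s - r| := by
    filter_upwards [self_mem_nhdsWithin] with s hs
    exact h.abs_setAverage_ball_sub_le hf hg hr hs fun t ht ↦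
      setAverage_norm_le_of_maxFn_le hα ((lt_min hr hs).trans_le ht.1) hM
  have hbound : Tendsto (fun s : ℝ ↦ α * |s - r|) (𝓝[>] 0) (𝓝 (α * |0 - r|)) :=
    (Continuous.tendsto (by fun_prop) 0).mono_left nhdsWithin_le_nhds
  have hle := le_of_tendsto_of_tendsto (hlim.sub_const _).abs hbound hLip
  rwa [zero_sub, abs_neg, abs_of_pos hr, mul_comm] at hle

end WeakGradient

/-- the precise representative is approximated by ball averages at
points where the maximal function of the gradient is bounded. -/
theorem abs_preciseRep_sub_average_le {n : ℕ} :
    ∃ C : ℝ, 0 < C ∧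
      ∀ (p : ℝ≥0∞), 1 ≤ p →
      ∀ (f : Euc n → ℝ) (g : Euc n → Euc n),
        MemLp f p volume → MemLp g p volume → IsWeakGradient f g →
      ∀ α : ℝ, 0 < α →
      ∀ x : Euc n, maxFn (fun y => ENNReal.ofReal ‖g y‖) x ≤ ENNReal.ofReal α →
        Tendsto (fun δ : ℝ => ⨍ y in ball x δ, f y) (𝓝[>] (0:ℝ)) (𝓝 (preciseRep f x)) →
      ∀ r : ℝ, 0 < r →
        |preciseRep f x - ⨍ y in ball x r, f y| ≤ C * r * α :=
  ⟨1, one_pos, fun _ hp _ _ hf hg h _ hα _ hM hlim _ hr ↦ by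
    simpa only [one_mul] using abs_preciseRep_sub_average_le_general (hf.locallyIntegrable hp)
      (hg.locallyIntegrable hp) h hα.le hM hlim hr⟩
end

section
/- Let k be a positive integer and 1 ≤ p < ∞ with kp < n, and let m ∈ ℕ. There exists a constant C depending only on n, k, p, m such that for every F = (F₁,…,F_m) ∈ W^{k,p}(ℝⁿ, ℝ^m) and every λ ∈ (0,∞), one has R_{k,p}({ x ∈ ℝⁿ : M|F|(x) > λ }) ≤ (C/λ^p) ‖F‖_{W^{k,p}(ℝⁿ,ℝ^m)}^p, where M|F|(x) = sup_{r>0} ⨍_{B(x,r)} |F(y)| dy and |F(y)| is the Euclidean norm of F(y). -/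
open MeasureTheory Filter Metric Set
open scoped ENNReal NNReal Topology

/-!
For a smooth compactly supported `u`, write `u x` as the `k`-fold iterated integral of its `k`-th
derivative along each ray issuing from `x`; averaging over directions in polar coordinates bounds
`|u x|` by the Riesz potential `I_k |∇ᵏ u| x`. Cutting off at unit scale around `x` removes the
support condition at the cost of the lower order derivatives, and mollification carries
`|f| ≤ C I_k (∑ |D^α f|)` over to Sobolev functions, almost everywhere.

The Riesz kernel is an `A₁` weight: its average over a ball centred at `x` is at most a constant
times its value at `x`. Averages of `I_k h` are `I_k` of averages, so `M (I_k h) ≤ C I_k h`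
everywhere, and hence `M |F| ≤ C I_k h` with `h = ∑ |D^α F_i|`. A multiple of `h` is then an
admissible test function for the capacity of `{M |F| > λ}`. The same `A₁` bound controls the
mollified derivatives uniformly in the scale of mollification.
-/

open MeasureTheory.Measure
open Module (finrank)
open scoped Convolution

section Polar

variable {E : Type*} [NormedAddCommGroup E] [NormedSpace ℝ E] [FiniteDimensional ℝ E]
  [Nontrivial E] [MeasurableSpace E] [BorelSpace E]

theorem lintegral_eq_lintegral_toSphere_lintegral_Ioi (μ : Measure E) [μ.IsAddHaarMeasure]
    {f : E → ℝ≥0∞} (hf : Measurable f) :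
    ∫⁻ x, f x ∂μ = ∫⁻ θ : sphere (0 : E) 1, (∫⁻ t in Ioi (0 : ℝ),
      ENNReal.ofReal (t ^ (finrank ℝ E - 1)) * f (t • (θ : E))) ∂μ.toSphere := by
  calc ∫⁻ x, f x ∂μ
      = ∫⁻ x : ({0}ᶜ : Set E), f x ∂μ.comap (↑) := by
        rw [lintegral_subtype_comap (measurableSet_singleton _).compl f, restrict_compl_singleton]
    _ = ∫⁻ z, f ((z.2 : ℝ) • (z.1 : E)) ∂μ.toSphere.prod (volumeIoiPow (finrank ℝ E - 1)) := by
        rw [← μ.measurePreserving_homeomorphUnitSphereProd.lintegral_comp_emb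
          (Homeomorph.measurableEmbedding _)]
        refine lintegral_congr fun x => congrArg f ?_
        exact congrArg Subtype.val ((homeomorphUnitSphereProd E).symm_apply_apply x).symm
    _ = ∫⁻ θ : sphere (0 : E) 1,
          ∫⁻ t, f ((t : ℝ) • (θ : E)) ∂volumeIoiPow (finrank ℝ E - 1) ∂μ.toSphere :=
        lintegral_prod _ (Measurable.aemeasurable (by fun_prop))
    _ = _ := by
        refine lintegral_congr fun θ => ?_
        rw [volumeIoiPow, lintegral_withDensity_eq_lintegral_mul _ (by fun_prop) (by fun_prop),
          ← lintegral_subtype_comap measurableSet_Ioi]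
        rfl

end Polar

section RieszKernel

variable {E : Type*} [NormedAddCommGroup E] [NormedSpace ℝ E] {a : ℝ}

/-- The unnormalised Riesz kernel `‖x‖ ^ (a - d)` on a space of dimension `d`. Up to the factor
`γ(a)`, the Riesz potential of `g` is `g ⋆ₗ rieszKernel E a`. For `a < d` its value at the origin
is `0` rather than `∞`, because the real power `0 ^ (a - d)` is `0`. -/
noncomputable def rieszKernel (E : Type*) [NormedAddCommGroup E] [NormedSpace ℝ E] (a : ℝ) (x : E) :
    ℝ≥0∞ :=
  ENNReal.ofReal (‖x‖ ^ (a - finrank ℝ E))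

@[fun_prop]
theorem measurable_rieszKernel [MeasurableSpace E] [OpensMeasurableSpace E] :
    Measurable (rieszKernel E a) := by
  unfold rieszKernel
  fun_prop

theorem rieszKernel_neg (x : E) : rieszKernel E a (-x) = rieszKernel E a x := by
  simp only [rieszKernel, norm_neg]

theorem ofReal_pow_mul_rieszKernel_smul [FiniteDimensional ℝ E] [Nontrivial E] {t : ℝ} (ht : 0 < t)
    {θ : E} (hθ : ‖θ‖ = 1) :
    ENNReal.ofReal (t ^ (finrank ℝ E - 1)) * rieszKernel E a (t • θ) =
      ENNReal.ofReal (t ^ (a - 1)) := by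
  rw [rieszKernel, norm_smul, hθ, mul_one, Real.norm_of_nonneg ht.le,
    ← ENNReal.ofReal_mul (by positivity), ← Real.rpow_natCast, ← Real.rpow_add ht,
    Nat.cast_pred Module.finrank_pos]
  congr 2
  ring

theorem rieszKernel_le_mul_of_norm_le (ha : a ≤ finrank ℝ E) {c : ℝ} (hc : 0 < c) {x z : E}
    (hx : x ≠ 0) (hxz : ‖x‖ ≤ c * ‖z‖) :
    rieszKernel E a z ≤ ENNReal.ofReal (c ^ (finrank ℝ E - a)) * rieszKernel E a x := by
  have hx' : 0 < ‖x‖ := norm_pos_iff.2 hx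
  rw [rieszKernel, rieszKernel, ← ENNReal.ofReal_mul (by positivity)]
  refine ENNReal.ofReal_le_ofReal ?_
  calc ‖z‖ ^ (a - finrank ℝ E) ≤ (c⁻¹ * ‖x‖) ^ (a - finrank ℝ E) :=
        Real.rpow_le_rpow_of_nonpos (by positivity) ((inv_mul_le_iff₀ hc).2 hxz) (by linarith)
    _ = c ^ (finrank ℝ E - a) * ‖x‖ ^ (a - finrank ℝ E) := by
        rw [Real.mul_rpow (by positivity) hx'.le, Real.inv_rpow hc.le, ← Real.rpow_neg hc.le,
          neg_sub]

end RieszKernel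

theorem lintegral_Ioo_ofReal_rpow_sub_one {a R : ℝ} (ha : 0 < a) (hR : 0 ≤ R) :
    ∫⁻ t in Ioo 0 R, ENNReal.ofReal (t ^ (a - 1)) = ENNReal.ofReal (R ^ a / a) := by
  have hint : IntervalIntegrable (fun t : ℝ => t ^ (a - 1)) volume 0 R :=
    intervalIntegral.intervalIntegrable_rpow' (by linarith)
  rw [restrict_Ioo_eq_restrict_Ioc, ← ofReal_integral_eq_lintegral_ofReal hint.1,
    ← intervalIntegral.integral_of_le hR, integral_rpow (.inl (by linarith)), sub_add_cancel,
    Real.zero_rpow ha.ne', sub_zero]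
  exact (ae_restrict_mem measurableSet_Ioc).mono fun t ht => Real.rpow_nonneg ht.1.le _

section A1Condition

variable {E : Type*} [NormedAddCommGroup E] [NormedSpace ℝ E] [FiniteDimensional ℝ E]
  [Nontrivial E] [MeasurableSpace E] [BorelSpace E] (μ : Measure E) [μ.IsAddHaarMeasure] {a : ℝ}

theorem setLIntegral_ball_zero_rieszKernel (ha : 0 < a) {R : ℝ} (hR : 0 ≤ R) :
    ∫⁻ z in ball 0 R, rieszKernel E a z ∂μ =
      ENNReal.ofReal (finrank ℝ E / a * R ^ a) * μ (ball 0 1) := by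
  rw [← lintegral_indicator measurableSet_ball, lintegral_eq_lintegral_toSphere_lintegral_Ioi μ
    (measurable_rieszKernel.indicator measurableSet_ball)]
  have hradial (θ : sphere (0 : E) 1) :
      ∫⁻ t in Ioi (0 : ℝ), ENNReal.ofReal (t ^ (finrank ℝ E - 1)) *
        (ball 0 R).indicator (rieszKernel E a) (t • (θ : E)) = ENNReal.ofReal (R ^ a / a) := by
    rw [← lintegral_Ioo_ofReal_rpow_sub_one ha hR, ← Ioi_inter_Iio, inter_comm,
      ← setLIntegral_indicator measurableSet_Iio]
    refine setLIntegral_congr_fun measurableSet_Ioi fun t (ht : 0 < t) => ?_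
    have hθ : ‖(θ : E)‖ = 1 := by simp
    have hmem : t • (θ : E) ∈ ball 0 R ↔ t ∈ Iio R := by
      rw [mem_ball_zero_iff, norm_smul, hθ, mul_one, Real.norm_of_nonneg ht.le, mem_Iio]
    by_cases htR : t ∈ Iio R
    · simp only [indicator_of_mem (hmem.2 htR), indicator_of_mem htR,
        ofReal_pow_mul_rieszKernel_smul ht hθ]
    · simp only [indicator_of_notMem (mt hmem.1 htR), indicator_of_notMem htR, mul_zero]
  simp_rw [hradial]
  rw [lintegral_const, toSphere_apply_univ, ← ENNReal.ofReal_natCast, ← mul_assoc,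
    ← ENNReal.ofReal_mul (by positivity)]
  congr 2
  ring

/-- The constant in the Muckenhoupt `A₁` condition for the Riesz kernel of order `a` in dimension
`d`, which compares averages of the kernel over balls with its value at the centre. -/
noncomputable def rieszA1Const (d : ℕ) (a : ℝ) : ℝ≥0 :=
  Real.toNNReal (d / a * 3 ^ a * 2 ^ (d - a))

theorem setLIntegral_ball_rieszKernel_le (ha : 0 < a) (had : a ≤ finrank ℝ E) {x : E} (hx : x ≠ 0)
    {r : ℝ} (hr : 0 < r) :
    ∫⁻ z in ball x r, rieszKernel E a z ∂μ ≤
      rieszA1Const (finrank ℝ E) a * μ (ball x r) * rieszKernel E a x := by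
  set d := finrank ℝ E
  have hd : 1 ≤ d / a := (one_le_div ha).2 had
  rcases lt_or_ge ‖x‖ (2 * r) with hnear | hfar
  · have hsub : ball x r ⊆ ball 0 (3 * r) := ball_subset_ball' (by rw [dist_zero_right]; linarith)
    obtain ⟨v, hv⟩ : ∃ v : E, ‖v‖ = r := exists_norm_eq E hr.le
    calc ∫⁻ z in ball x r, rieszKernel E a z ∂μ
        ≤ ∫⁻ z in ball 0 (3 * r), rieszKernel E a z ∂μ := lintegral_mono_set hsub
      _ = ENNReal.ofReal (d / a * (3 * r) ^ a) * μ (ball 0 1) :=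
          setLIntegral_ball_zero_rieszKernel μ ha (by positivity)
      _ = ENNReal.ofReal (d / a * 3 ^ a) * μ (ball x r) * rieszKernel E a v := by
          have hpow : (3 * r) ^ a = 3 ^ a * (r ^ d * r ^ (a - d)) := by
            rw [Real.mul_rpow (by norm_num) hr.le, ← Real.rpow_natCast r d, ← Real.rpow_add hr,
              add_sub_cancel]
          rw [rieszKernel, hv, addHaar_ball μ x hr.le, hpow, ← mul_assoc,
            ENNReal.ofReal_mul (by positivity), ENNReal.ofReal_mul (p := r ^ d) (by positivity)]
          ring
      _ ≤ ENNReal.ofReal (d / a * 3 ^ a) * μ (ball x r) *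
            (ENNReal.ofReal (2 ^ (d - a)) * rieszKernel E a x) := by
          gcongr
          exact rieszKernel_le_mul_of_norm_le had two_pos hx (by linarith)
      _ = rieszA1Const d a * μ (ball x r) * rieszKernel E a x := by
          rw [rieszA1Const, ← ENNReal.ofReal, ENNReal.ofReal_mul (q := 2 ^ (d - a)) (by positivity)]
          ring
  · calc ∫⁻ z in ball x r, rieszKernel E a z ∂μ
        ≤ ∫⁻ _ in ball x r, ENNReal.ofReal (2 ^ (d - a)) * rieszKernel E a x ∂μ := by
          refine setLIntegral_mono' measurableSet_ball fun z hz =>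
            rieszKernel_le_mul_of_norm_le had two_pos hx ?_
          have := norm_le_norm_add_norm_sub' x z
          rw [mem_ball', dist_eq_norm] at hz
          linarith
      _ = ENNReal.ofReal (2 ^ (d - a)) * μ (ball x r) * rieszKernel E a x := by
          rw [setLIntegral_const, mul_right_comm]
      _ ≤ rieszA1Const d a * μ (ball x r) * rieszKernel E a x := by
          gcongr
          refine ENNReal.ofReal_le_ofReal (le_mul_of_one_le_left (by positivity) ?_)
          exact one_le_mul_of_one_le_of_one_le hd (Real.one_le_rpow (by norm_num) ha.le)

end A1Condition

section LConvolution

variable {G : Type*} [MeasurableSpace G] [Add G] [Neg G] {μ : Measure G} {f f₁ f₂ g : G → ℝ≥0∞}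

theorem lconvolution_le_lconvolution_left (h : f₁ ≤ᵐ[μ] f₂) (x : G) :
    (f₁ ⋆ₗ[μ] g) x ≤ (f₂ ⋆ₗ[μ] g) x :=
  lintegral_mono_ae (h.mono fun _ hy => mul_le_mul_left hy _)

theorem const_mul_lconvolution {c : ℝ≥0∞} (hc : c ≠ ∞) (x : G) :
    ((fun y => c * f y) ⋆ₗ[μ] g) x = c * (f ⋆ₗ[μ] g) x := by
  simp_rw [lconvolution_def, mul_assoc]
  exact lintegral_const_mul' c _ hc

theorem sum_lconvolution_le {ι : Type*} (s : Finset ι) (f : ι → G → ℝ≥0∞) (x : G) :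
    ∑ i ∈ s, (f i ⋆ₗ[μ] g) x ≤ ((fun y => ∑ i ∈ s, f i y) ⋆ₗ[μ] g) x := by
  classical
  induction s using Finset.induction with
  | empty => simp
  | insert i s hi ih =>
    simp_rw [Finset.sum_insert hi, lconvolution_def, add_mul]
    exact (add_le_add_right ih _).trans (le_lintegral_add _ _)

end LConvolution

section BallAverages

variable {E : Type*} [NormedAddCommGroup E] [MeasurableSpace E] [BorelSpace E] (μ : Measure E)

/-- The convolution kernel `1_{B(0,r)} / μ(B(0,r))` of the average over balls of radius `r`. -/
noncomputable def ballAverageKernel (r : ℝ) : E → ℝ≥0∞ :=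
  (ball 0 r).indicator fun _ => (μ (ball 0 r))⁻¹

@[fun_prop]
theorem measurable_ballAverageKernel (r : ℝ) : Measurable (ballAverageKernel μ r) :=
  measurable_const.indicator measurableSet_ball

variable [NormedSpace ℝ E] [FiniteDimensional ℝ E] [μ.IsAddHaarMeasure]

theorem ballAverageKernel_lconvolution {r : ℝ} (hr : 0 < r) (h : E → ℝ≥0∞) (x : E) :
    (ballAverageKernel μ r ⋆ₗ[μ] h) x = (μ (ball x r))⁻¹ * ∫⁻ y in ball x r, h y ∂μ := by
  have hshift (y : E) : h y * ballAverageKernel μ r (-y + x) =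
      (ball x r).indicator (fun y => (μ (ball x r))⁻¹ * h y) y := by
    have hmem : -y + x ∈ ball 0 r ↔ y ∈ ball x r := by
      rw [mem_ball_zero_iff, neg_add_eq_sub, mem_ball_iff_norm']
    rw [addHaar_ball_center]
    by_cases hy : y ∈ ball x r
    · rw [ballAverageKernel, indicator_of_mem hy, indicator_of_mem (hmem.2 hy), mul_comm]
    · rw [ballAverageKernel, indicator_of_notMem hy, indicator_of_notMem (mt hmem.1 hy), mul_zero]
  rw [lconvolution_comm, lconvolution_def, lintegral_congr hshift,
    lintegral_indicator measurableSet_ball,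
    lintegral_const_mul' _ _ (ENNReal.inv_ne_top.2 (measure_ball_pos μ x hr).ne')]

theorem ofReal_normed_le_ballAverageKernel (φ : ContDiffBump (0 : E)) {K : ℝ}
    (hK : φ.rOut ≤ K * φ.rIn) (y : E) :
    ENNReal.ofReal (φ.normed μ y) ≤
      ENNReal.ofReal (K ^ finrank ℝ E) * ballAverageKernel μ φ.rOut y := by
  by_cases hy : y ∈ ball 0 φ.rOut
  · have hball : μ (ball 0 φ.rOut) = μ (closedBall 0 φ.rOut) := by
      rw [addHaar_ball_of_pos μ 0 φ.rOut_pos, addHaar_closedBall μ 0 φ.rOut_pos.le]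
    have hfin : μ (closedBall 0 φ.rOut) ≠ ∞ := measure_closedBall_lt_top.ne
    have hμ : 0 < μ.real (closedBall 0 φ.rOut) :=
      ENNReal.toReal_pos (measure_closedBall_pos μ 0 φ.rOut_pos).ne' hfin
    rw [ballAverageKernel, indicator_of_mem hy, hball, ← div_eq_mul_inv]
    refine (ENNReal.ofReal_le_ofReal (φ.normed_le_div_measure_closedBall_rOut μ K hK y)).trans_eq ?_
    rw [ENNReal.ofReal_div_of_pos hμ, ofReal_measureReal hfin]
  · have : φ.normed μ y = 0 := by
      rwa [← Function.notMem_support, φ.support_normed_eq]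
    simp [this]

variable [Nontrivial E] {a : ℝ}

theorem ballAverageKernel_lconvolution_rieszKernel_le (ha : 0 < a) (had : a ≤ finrank ℝ E)
    {r : ℝ} (hr : 0 < r) {x : E} (hx : x ≠ 0) :
    (ballAverageKernel μ r ⋆ₗ[μ] rieszKernel E a) x ≤
      rieszA1Const (finrank ℝ E) a * rieszKernel E a x := by
  calc (ballAverageKernel μ r ⋆ₗ[μ] rieszKernel E a) x
      ≤ (μ (ball x r))⁻¹ *
          (rieszA1Const (finrank ℝ E) a * μ (ball x r) * rieszKernel E a x) := by
        rw [ballAverageKernel_lconvolution μ hr]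
        gcongr
        exact setLIntegral_ball_rieszKernel_le μ ha had hx hr
    _ = (μ (ball x r))⁻¹ * μ (ball x r) *
          (rieszA1Const (finrank ℝ E) a * rieszKernel E a x) := by ring
    _ = rieszA1Const (finrank ℝ E) a * rieszKernel E a x := by
        rw [ENNReal.inv_mul_cancel (measure_ball_pos μ x hr).ne' measure_ball_lt_top.ne, one_mul]

theorem ballAverageKernel_lconvolution_lconvolution_rieszKernel_le (ha : 0 < a)
    (had : a ≤ finrank ℝ E) {r : ℝ} (hr : 0 < r) {g : E → ℝ≥0∞} (hg : AEMeasurable g μ) (x : E) :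
    (ballAverageKernel μ r ⋆ₗ[μ] g ⋆ₗ[μ] rieszKernel E a) x ≤
      rieszA1Const (finrank ℝ E) a * (g ⋆ₗ[μ] rieszKernel E a) x := by
  calc (ballAverageKernel μ r ⋆ₗ[μ] g ⋆ₗ[μ] rieszKernel E a) x
      = (g ⋆ₗ[μ] ballAverageKernel μ r ⋆ₗ[μ] rieszKernel E a) x := by
        rw [lconvolution_assoc₀ (by fun_prop) hg (by fun_prop),
          lconvolution_comm (f := ballAverageKernel μ r),
          ← lconvolution_assoc₀ hg (by fun_prop) (by fun_prop)]
    _ ≤ ∫⁻ y, rieszA1Const (finrank ℝ E) a * (g y * rieszKernel E a (-y + x)) ∂μ := by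
        refine lintegral_mono_ae ((μ.ae_ne x).mono fun y hy => ?_)
        have hyx : -y + x ≠ 0 := by rwa [neg_add_eq_sub, sub_ne_zero, ne_comm]
        rw [mul_left_comm]
        gcongr
        exact ballAverageKernel_lconvolution_rieszKernel_le μ ha had hr hyx
    _ = rieszA1Const (finrank ℝ E) a * (g ⋆ₗ[μ] rieszKernel E a) x :=
        lintegral_const_mul' _ _ ENNReal.coe_ne_top

theorem normed_lconvolution_lconvolution_rieszKernel_le (ha : 0 < a) (had : a ≤ finrank ℝ E)
    (φ : ContDiffBump (0 : E)) {K : ℝ} (hK : φ.rOut ≤ K * φ.rIn) {g : E → ℝ≥0∞}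
    (hg : AEMeasurable g μ) (x : E) :
    ((fun y => ENNReal.ofReal (φ.normed μ y)) ⋆ₗ[μ] g ⋆ₗ[μ] rieszKernel E a) x ≤
      ENNReal.ofReal (K ^ finrank ℝ E) *
        (rieszA1Const (finrank ℝ E) a * (g ⋆ₗ[μ] rieszKernel E a) x) := by
  refine (lconvolution_le_lconvolution_left
    (.of_forall (ofReal_normed_le_ballAverageKernel μ φ hK)) x).trans ?_
  rw [const_mul_lconvolution ENNReal.ofReal_ne_top]
  gcongr
  exact ballAverageKernel_lconvolution_lconvolution_rieszKernel_le μ ha had φ.rOut_pos hg x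

end BallAverages

section Representation

theorem lconvolution_rieszKernel_eq_lintegral_toSphere {E : Type*} [NormedAddCommGroup E]
    [NormedSpace ℝ E] [FiniteDimensional ℝ E] [Nontrivial E] [MeasurableSpace E] [BorelSpace E]
    (μ : Measure E) [μ.IsAddHaarMeasure] {a : ℝ} {g : E → ℝ≥0∞} (hg : Measurable g) (x : E) :
    (g ⋆ₗ[μ] rieszKernel E a) x = ∫⁻ θ : sphere (0 : E) 1, (∫⁻ t in Ioi (0 : ℝ),
      ENNReal.ofReal (t ^ (a - 1)) * g (x + t • (θ : E))) ∂μ.toSphere := by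
  rw [lconvolution_def, ← lintegral_add_left_eq_self _ x,
    lintegral_eq_lintegral_toSphere_lintegral_Ioi μ (by fun_prop)]
  refine lintegral_congr fun θ => setLIntegral_congr_fun measurableSet_Ioi fun t (ht : 0 < t) => ?_
  have hθ : ‖(θ : E)‖ = 1 := by simp
  have hneg : -(x + t • (θ : E)) + x = -(t • (θ : E)) := by abel
  simp only [hneg, rieszKernel_neg]
  rw [mul_left_comm, ofReal_pow_mul_rieszKernel_smul ht hθ, mul_comm]

variable {F : Type*} [NormedAddCommGroup F] [NormedSpace ℝ F]

theorem enorm_apply_zero_le_lintegral_iteratedDeriv [CompleteSpace F] {k : ℕ} {w : ℝ → F}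
    (hw : ContDiff ℝ (k + 1 : ℕ) w) (hzero : w =ᶠ[atTop] 0) :
    ‖w 0‖ₑ ≤ ∫⁻ t in Ioi (0 : ℝ), ENNReal.ofReal (t ^ k) * ‖iteratedDeriv (k + 1) w t‖ₑ := by
  obtain ⟨T, hT₀, hT⟩ : ∃ T : ℝ, 0 < T ∧ w =ᶠ[𝓝 T] 0 := by
    obtain ⟨S, hS⟩ := eventually_atTop.1 hzero
    exact ⟨max S 0 + 1, by positivity, (lt_mem_nhds (lt_add_one _)).mono fun t ht =>
      hS t ((le_max_left S 0).trans ht.le)⟩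
  have huniq : UniqueDiffOn ℝ (uIcc T 0) := uniqueDiffOn_uIcc hT₀.ne'
  have hwithin (j : ℕ) (hj : j ≤ k + 1) (t : ℝ) (ht : t ∈ uIcc T 0) :
      iteratedDerivWithin j w (uIcc T 0) t = iteratedDeriv j w t :=
    iteratedDerivWithin_eq_iteratedDeriv huniq (hw.of_le (by exact_mod_cast hj)).contDiffAt ht
  have htaylor : taylorWithinEval w k (uIcc T 0) T 0 = 0 := by
    rw [taylor_within_apply]
    refine Finset.sum_eq_zero fun j hj => ?_
    have hjk : j ≤ k + 1 := (Finset.mem_range.1 hj).le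
    rw [hwithin j hjk T left_mem_uIcc, hT.iteratedDeriv_eq]
    simp
  have hw₀ := taylor_integral_remainder (x := 0) (x₀ := T) (n := k) hw.contDiffOn
  rw [htaylor, sub_zero, intervalIntegral.integral_symm,
    intervalIntegral.integral_of_le hT₀.le] at hw₀
  rw [hw₀, enorm_neg]
  refine (enorm_integral_le_lintegral_enorm _).trans
    ((setLIntegral_mono' measurableSet_Ioc fun t ht => ?_).trans
      (lintegral_mono_set Ioc_subset_Ioi_self))
  rw [hwithin _ le_rfl t (by rw [uIcc_of_ge hT₀.le]; exact ⟨ht.1.le, ht.2⟩), enorm_smul]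
  gcongr
  rw [zero_sub, Real.enorm_eq_ofReal_abs, abs_div, abs_pow, abs_neg, abs_of_pos ht.1, Nat.abs_cast]
  refine ENNReal.ofReal_le_ofReal (div_le_self (pow_nonneg ht.1.le k) ?_)
  exact_mod_cast k.factorial_pos

variable {E : Type*} [NormedAddCommGroup E] [NormedSpace ℝ E]

theorem norm_iteratedDeriv_comp_add_smul_le {j : ℕ} {u : E → F} (hu : ContDiff ℝ j u) (x θ : E)
    (t : ℝ) :
    ‖iteratedDeriv j (fun s : ℝ => u (x + s • θ)) t‖ ≤
      ‖iteratedFDeriv ℝ j u (x + t • θ)‖ * ‖θ‖ ^ j := by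
  have hline : iteratedFDeriv ℝ j (fun s : ℝ => u (x + s • θ)) t =
      (iteratedFDeriv ℝ j u (x + t • θ)).compContinuousLinearMap
        fun _ => ContinuousLinearMap.toSpanSingleton ℝ θ := by
    have hshift : ContDiff ℝ j fun z => u (x + z) := by fun_prop
    have := (ContinuousLinearMap.toSpanSingleton ℝ θ).iteratedFDeriv_comp_right hshift t le_rfl
    rwa [iteratedFDeriv_comp_add_left] at this
  rw [iteratedDeriv_eq_iteratedFDeriv, hline]
  simpa using (iteratedFDeriv ℝ j u (x + t • θ)).le_opNorm fun _ => θ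

theorem tendsto_add_smul_atTop_cocompact [ProperSpace E] (x : E) {θ : E} (hθ : θ ≠ 0) :
    Tendsto (fun t : ℝ => x + t • θ) atTop (cocompact E) := by
  rw [← cobounded_eq_cocompact, ← tendsto_norm_atTop_iff_cobounded]
  refine tendsto_atTop_mono (fun t => ?_) (tendsto_atTop_add_const_right atTop (-‖x‖)
    (tendsto_id.atTop_mul_const (norm_pos_iff.2 hθ)))
  calc t * ‖θ‖ + -‖x‖ ≤ ‖t • θ‖ - ‖x‖ := by
        rw [← sub_eq_add_neg, norm_smul]
        gcongr
        exact le_abs_self t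
    _ ≤ ‖x + t • θ‖ := by
        simpa [add_comm] using norm_sub_norm_le (t • θ) (-x)

theorem toSphere_univ_mul_enorm_le_lconvolution_rieszKernel [FiniteDimensional ℝ E] [Nontrivial E]
    [MeasurableSpace E] [BorelSpace E] [CompleteSpace F] (μ : Measure E) [μ.IsAddHaarMeasure]
    {k : ℕ} (hk : 0 < k) {u : E → F} (hu : ContDiff ℝ k u) (hsupp : HasCompactSupport u) (x : E) :
    μ.toSphere univ * ‖u x‖ₑ ≤
      ((fun y => ‖iteratedFDeriv ℝ k u y‖ₑ) ⋆ₗ[μ] rieszKernel E k) x := by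
  obtain ⟨k, rfl⟩ := Nat.exists_eq_succ_of_ne_zero hk.ne'
  have hmeas : Measurable fun y => ‖iteratedFDeriv ℝ (k + 1) u y‖ₑ :=
    (hu.continuous_iteratedFDeriv le_rfl).enorm.measurable
  rw [Nat.succ_eq_add_one, lconvolution_rieszKernel_eq_lintegral_toSphere μ hmeas, mul_comm,
    ← lintegral_const]
  refine lintegral_mono fun θ => ?_
  have hθ : ‖(θ : E)‖ = 1 := by simp
  have hzero : (fun t : ℝ => u (x + t • (θ : E))) =ᶠ[atTop] 0 :=
    (hasCompactSupport_iff_eventuallyEq.1 hsupp).comp_tendsto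
      ((tendsto_add_smul_atTop_cocompact x (ne_zero_of_norm_ne_zero (by simp))).trans
        coclosedCompact_eq_cocompact.ge)
  calc ‖u x‖ₑ ≤ ∫⁻ t in Ioi (0 : ℝ), ENNReal.ofReal (t ^ k) *
        ‖iteratedDeriv (k + 1) (fun t : ℝ => u (x + t • (θ : E))) t‖ₑ := by
        simpa using enorm_apply_zero_le_lintegral_iteratedDeriv (by fun_prop) hzero
    _ ≤ ∫⁻ t in Ioi (0 : ℝ), ENNReal.ofReal (t ^ (((k + 1 : ℕ) : ℝ) - 1)) *
        ‖iteratedFDeriv ℝ (k + 1) u (x + t • (θ : E))‖ₑ := by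
        refine setLIntegral_mono' measurableSet_Ioi fun t _ => ?_
        rw [Nat.cast_succ, add_sub_cancel_right, Real.rpow_natCast]
        gcongr
        exact enorm_le_iff_norm_le.2
          (by simpa [hθ] using norm_iteratedDeriv_comp_add_smul_le hu x (θ : E) t)

end Representation

section PointwiseBound

variable {E : Type*} [NormedAddCommGroup E] [NormedSpace ℝ E] [FiniteDimensional ℝ E]

theorem exists_nnnorm_iteratedFDeriv_contDiffBump_le (χ : ContDiffBump (0 : E)) (k : ℕ) :
    ∃ B : ℝ≥0, ∀ j ≤ k, ∀ x, ‖iteratedFDeriv ℝ j χ x‖₊ ≤ B := by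
  have hbound (j : ℕ) : ∃ B : ℝ, ∀ x, ‖iteratedFDeriv ℝ j χ x‖ ≤ B :=
    (χ.hasCompactSupport.iteratedFDeriv j).exists_bound_of_continuous
      ((χ.contDiff (n := j)).continuous_iteratedFDeriv le_rfl)
  choose B hB using hbound
  refine ⟨∑ j ∈ Finset.range (k + 1), (B j).toNNReal, fun j hj x => ?_⟩
  calc ‖iteratedFDeriv ℝ j χ x‖₊ ≤ (B j).toNNReal := NNReal.le_toNNReal_of_coe_le (hB j x)
    _ ≤ ∑ j ∈ Finset.range (k + 1), (B j).toNNReal :=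
        Finset.single_le_sum (f := fun j => (B j).toNNReal) (fun _ _ => zero_le)
          (Finset.mem_range_succ_iff.2 hj)

theorem exists_hasCompactSupport_enorm_iteratedFDeriv_le (E F : Type*) [NormedAddCommGroup E]
    [NormedSpace ℝ E] [FiniteDimensional ℝ E] [NormedAddCommGroup F] [NormedSpace ℝ F] (k : ℕ) :
    ∃ C : ℝ≥0, ∀ f : E → F, ContDiff ℝ k f → ∀ x, ∃ u : E → F,
      ContDiff ℝ k u ∧ HasCompactSupport u ∧ u x = f x ∧ ∀ y, ‖iteratedFDeriv ℝ k u y‖ₑ ≤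
        C * ∑ j ∈ Finset.range (k + 1), ‖iteratedFDeriv ℝ j f y‖ₑ := by
  let χ : ContDiffBump (0 : E) := default
  obtain ⟨B, hB⟩ := exists_nnnorm_iteratedFDeriv_contDiffBump_le χ k
  refine ⟨2 ^ k * B, fun f hf x => ⟨fun y => χ (y - x) • f y, ?_, ?_, ?_, fun y => ?_⟩⟩
  · exact (χ.contDiff.comp (contDiff_id.sub contDiff_const)).smul hf
  · exact (χ.hasCompactSupport.comp_homeomorph (Homeomorph.subRight x)).smul_right
  · simp only [sub_self, χ.one_of_mem_closedBall (mem_closedBall_self χ.rIn_pos.le), one_smul]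
  have hχ : ContDiff ℝ k fun y => χ (y - x) := χ.contDiff.comp (contDiff_id.sub contDiff_const)
  have hleibniz : ‖iteratedFDeriv ℝ k (fun y => χ (y - x) • f y) y‖₊ ≤
      2 ^ k * B * ∑ j ∈ Finset.range (k + 1), ‖iteratedFDeriv ℝ j f y‖₊ := by
    refine NNReal.coe_le_coe.1 ((norm_iteratedFDeriv_smul_le hχ hf y le_rfl).trans ?_)
    push_cast
    rw [← Finset.sum_range_reflect (fun j => ‖iteratedFDeriv ℝ j f y‖), Finset.mul_sum]
    refine Finset.sum_le_sum fun j hj => ?_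
    have hjk : j ≤ k := Finset.mem_range_succ_iff.1 hj
    rw [iteratedFDeriv_comp_sub, show k + 1 - 1 - j = k - j by lia]
    gcongr
    · exact_mod_cast Nat.choose_le_two_pow k j
    · exact hB j hjk (y - x)
  simpa only [enorm_eq_nnnorm, ← ENNReal.ofNNReal_finsetSum, ← ENNReal.coe_mul, ENNReal.coe_le_coe]
    using hleibniz

theorem exists_enorm_le_mul_lconvolution_rieszKernel {F : Type*} [NormedAddCommGroup F]
    [NormedSpace ℝ F] [CompleteSpace F] [Nontrivial E] [MeasurableSpace E] [BorelSpace E]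
    (μ : Measure E) [μ.IsAddHaarMeasure] {k : ℕ} (hk : 0 < k) :
    ∃ C : ℝ≥0, ∀ f : E → F, ContDiff ℝ k f → ∀ x,
      ‖f x‖ₑ ≤ C * ((fun y => ∑ j ∈ Finset.range (k + 1), ‖iteratedFDeriv ℝ j f y‖ₑ) ⋆ₗ[μ]
        rieszKernel E k) x := by
  obtain ⟨C, hC⟩ := exists_hasCompactSupport_enorm_iteratedFDeriv_le E F k
  have hσ₀ : μ.toSphere univ ≠ 0 := measure_univ_ne_zero.2 (toSphere_ne_zero μ)
  have hσ : μ.toSphere univ ≠ ∞ := measure_ne_top _ _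
  refine ⟨(μ.toSphere univ)⁻¹.toNNReal * C, fun f hf x => ?_⟩
  obtain ⟨u, hu, hsupp, hux, hle⟩ := hC f hf x
  rw [ENNReal.coe_mul, ENNReal.coe_toNNReal (ENNReal.inv_ne_top.2 hσ₀), mul_assoc,
    ← const_mul_lconvolution ENNReal.coe_ne_top, ← hux, ← ENNReal.mul_le_iff_le_inv hσ₀ hσ]
  exact (toSphere_univ_mul_enorm_le_lconvolution_rieszKernel μ hk hu hsupp x).trans
    (lconvolution_le_lconvolution_left (.of_forall hle) x)

end PointwiseBound

theorem nnnorm_le_sum_nnnorm_apply_orthonormalBasis {𝕜 ι κ E F : Type*} [RCLike 𝕜] [Fintype ι]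
    [Fintype κ] [DecidableEq κ] [NormedAddCommGroup E] [InnerProductSpace 𝕜 E]
    [NormedAddCommGroup F] [NormedSpace 𝕜 F] (b : OrthonormalBasis ι 𝕜 E)
    (A : ContinuousMultilinearMap 𝕜 (fun _ : κ => E) F) :
    ‖A‖₊ ≤ ∑ r : κ → ι, ‖A fun c => b (r c)‖₊ := by
  refine NNReal.coe_le_coe.1 (A.opNorm_le_bound (by positivity) fun v => ?_)
  have hv : v = fun c => ∑ i, b.repr (v c) i • b i := funext fun c => (b.sum_repr (v c)).symm
  calc ‖A v‖ = ‖∑ r : κ → ι, (∏ c, b.repr (v c) (r c)) • A fun c => b (r c)‖ := by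
        conv_lhs => rw [hv, A.map_sum]
        simp_rw [A.map_smul_univ]
    _ ≤ ∑ r : κ → ι, ‖A fun c => b (r c)‖ * ∏ c, ‖v c‖ := by
        refine (norm_sum_le _ _).trans (Finset.sum_le_sum fun r _ => ?_)
        rw [norm_smul, norm_prod, mul_comm]
        gcongr with c
        exact (PiLp.norm_apply_le _ _).trans_eq (b.repr.norm_map (v c))
    _ = _ := by
        rw [← Finset.sum_mul]
        push_cast
        rfl

section PartialDerivatives

variable {n : ℕ}

/-- The list containing `α i` copies of each direction `i`, in increasing order, along which
`mderiv α` differentiates. -/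
def multiIndexList (α : Fin n → ℕ) : List (Fin n) :=
  (List.finRange n).flatMap fun i => List.replicate (α i) i

theorem length_multiIndexList (α : Fin n → ℕ) : (multiIndexList α).length = mdeg α := by
  simp [multiIndexList, mdeg, List.length_flatMap, Fin.sum_univ_def]

theorem perm_multiIndexList_count (l : List (Fin n)) :
    l.Perm (multiIndexList fun i => l.count i) := by
  refine List.perm_iff_count.2 fun i => ?_
  simp [multiIndexList, List.count_flatMap, Function.comp_def, List.count_replicate,
    ← Fin.sum_univ_def]

/-- The multi-indices of degree at most `k` in `n` variables. -/
def multiIndices (n k : ℕ) : Finset (Fin n → ℕ) :=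
  {α ∈ Fintype.piFinset fun _ => Finset.range (k + 1) | mdeg α ≤ k}

@[simp]
theorem mem_multiIndices {k : ℕ} {α : Fin n → ℕ} : α ∈ multiIndices n k ↔ mdeg α ≤ k := by
  rw [multiIndices, Finset.mem_filter, Fintype.mem_piFinset, and_iff_right_iff_imp]
  exact fun hα i => Finset.mem_range_succ_iff.2 <|
    (Finset.single_le_sum (fun _ _ => zero_le) (Finset.mem_univ i)).trans hα

theorem sum_multiIndices {M : Type*} [AddCommMonoid M] (k : ℕ) (φ : (Fin n → ℕ) → M) :
    ∑ α ∈ multiIndices n k, φ α = ∑ β : Fin n → Fin (k + 1),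
      if mdeg (fun j => (β j : ℕ)) ≤ k then φ (fun j => (β j : ℕ)) else 0 := by
  rw [multiIndices, Finset.sum_filter]
  symm
  refine Finset.sum_bij (fun β _ j => (β j : ℕ)) (fun β _ => ?_) (fun β _ β' _ h => ?_)
    (fun α hα => ?_) fun _ _ => rfl
  · exact Fintype.mem_piFinset.2 fun j => Finset.mem_range.2 (β j).2
  · exact funext fun j => Fin.ext (congrFun h j)
  · exact ⟨fun j => ⟨α j, Finset.mem_range.1 (Fintype.mem_piFinset.1 hα j)⟩, Finset.mem_univ _, rfl⟩

variable {u : Euc n → ℝ}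

theorem contDiff_listDeriv (l : List (Fin n)) (hu : ContDiff ℝ (⊤ : ℕ∞) u) :
    ContDiff ℝ (⊤ : ℕ∞) (listDeriv l u) := by
  induction l with
  | nil => exact hu
  | cons i l ih => exact (ih.fderiv_right (m := (⊤ : ℕ∞)) le_rfl).clm_apply contDiff_const

theorem hasCompactSupport_listDeriv (l : List (Fin n)) (hu : HasCompactSupport u) :
    HasCompactSupport (listDeriv l u) := by
  induction l with
  | nil => exact hu
  | cons i l ih => exact ih.fderiv_apply (𝕜 := ℝ) _

theorem iteratedFDeriv_single_eq_listDeriv {j : ℕ} (hu : ContDiff ℝ (⊤ : ℕ∞) u) (r : Fin j → Fin n)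
    (x : Euc n) :
    iteratedFDeriv ℝ j u x (fun c => EuclideanSpace.single (r c) 1) =
      listDeriv (List.ofFn r) u x := by
  induction j generalizing x with
  | zero => simp [listDeriv]
  | succ j ih =>
    have hdiff : Differentiable ℝ (iteratedFDeriv ℝ j u) :=
      hu.differentiable_iteratedFDeriv (by exact_mod_cast WithTop.coe_lt_top j)
    rw [List.ofFn_succ, listDeriv, (hdiff x).iteratedFDeriv_succ_apply_left', Fin.tail_def]
    simp_rw [ih fun c => r c.succ]

theorem listDeriv_perm {l l' : List (Fin n)} (h : l.Perm l') (hu : ContDiff ℝ (⊤ : ℕ∞) u) :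
    listDeriv l u = listDeriv l' u := by
  induction h with
  | nil => rfl
  | cons i _ ih => simp only [listDeriv, ih]
  | trans _ _ ih₁ ih₂ => exact ih₁.trans ih₂
  | swap i j l =>
    ext x
    have hv := contDiff_listDeriv l hu
    have hdiff : DifferentiableAt ℝ (fderiv ℝ (listDeriv l u)) x :=
      (hv.fderiv_right (m := (⊤ : ℕ∞)) le_rfl).differentiable (by simp) x
    have hsymm : IsSymmSndFDerivAt ℝ (listDeriv l u) x :=
      hv.contDiffAt.isSymmSndFDerivAt (by
        simpa using WithTop.coe_le_coe.2 (le_top (a := (2 : ℕ∞))))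
    have hsecond (i j : Fin n) : listDeriv (j :: i :: l) u x = fderiv ℝ (fderiv ℝ (listDeriv l u)) x
        (EuclideanSpace.single j 1) (EuclideanSpace.single i 1) := by
      simp [listDeriv, fderiv_clm_apply hdiff (differentiableAt_const _)]
    rw [hsecond, hsecond]
    exact hsymm _ _

theorem iteratedFDeriv_single_eq_mderiv {j : ℕ} (hu : ContDiff ℝ (⊤ : ℕ∞) u) (r : Fin j → Fin n)
    (x : Euc n) :
    iteratedFDeriv ℝ j u x (fun c => EuclideanSpace.single (r c) 1) =
      mderiv (fun i => (List.ofFn r).count i) u x := by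
  rw [iteratedFDeriv_single_eq_listDeriv hu, listDeriv_perm (perm_multiIndexList_count _) hu]
  rfl

theorem enorm_iteratedFDeriv_le_sum_mderiv {j k : ℕ} (hjk : j ≤ k) (hu : ContDiff ℝ (⊤ : ℕ∞) u)
    (x : Euc n) :
    ‖iteratedFDeriv ℝ j u x‖ₑ ≤ n ^ j * ∑ α ∈ multiIndices n k, ‖mderiv α u x‖ₑ := by
  have happly (r : Fin j → Fin n) :
      ‖iteratedFDeriv ℝ j u x fun c => EuclideanSpace.basisFun (Fin n) ℝ (r c)‖₊ ≤
        ∑ α ∈ multiIndices n k, ‖mderiv α u x‖₊ := by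
    have hdeg : mdeg (fun i => (List.ofFn r).count i) = j := by
      rw [← length_multiIndexList, ← (perm_multiIndexList_count _).length_eq, List.length_ofFn]
    simp_rw [EuclideanSpace.basisFun_apply, iteratedFDeriv_single_eq_mderiv hu]
    exact Finset.single_le_sum (f := fun α => ‖mderiv α u x‖₊) (fun _ _ => zero_le)
      (mem_multiIndices.2 (hdeg.trans_le hjk))
  have hsum : ‖iteratedFDeriv ℝ j u x‖₊ ≤ n ^ j * ∑ α ∈ multiIndices n k, ‖mderiv α u x‖₊ :=
    (nnnorm_le_sum_nnnorm_apply_orthonormalBasis (EuclideanSpace.basisFun (Fin n) ℝ) _).trans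
      ((Finset.sum_le_card_nsmul _ _ _ fun r _ => happly r).trans_eq (by simp))
  simp_rw [enorm_eq_nnnorm]
  exact_mod_cast hsum

end PartialDerivatives

section Mollification

theorem enorm_convolution_lsmul_le {G 𝕜 F : Type*} [NontriviallyNormedField 𝕜]
    [NormedAddCommGroup F] [NormedSpace ℝ F] [NormedSpace 𝕜 F]
    [MeasurableSpace G] [AddCommGroup G] {μ : Measure G} (φ : G → 𝕜) (f : G → F) (x : G) :
    ‖(φ ⋆[ContinuousLinearMap.lsmul 𝕜 𝕜, μ] f) x‖ₑ ≤ ((‖φ ·‖ₑ) ⋆ₗ[μ] (‖f ·‖ₑ)) x := by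
  refine (enorm_integral_le_lintegral_enorm _).trans_eq (lintegral_congr fun y => ?_)
  rw [ContinuousLinearMap.lsmul_apply, enorm_smul, neg_add_eq_sub]

variable {n : ℕ} {φ f : Euc n → ℝ}

theorem listDeriv_comp_const_sub (l : List (Fin n)) (hφ : ContDiff ℝ (⊤ : ℕ∞) φ) (x : Euc n) :
    listDeriv l (fun y => φ (x - y)) = fun y => (-1 : ℝ) ^ l.length * listDeriv l φ (x - y) := by
  induction l with
  | nil => simp [listDeriv]
  | cons i l ih =>
    ext y
    have hdiff : HasFDerivAt (listDeriv l φ) (fderiv ℝ (listDeriv l φ) (x - y)) (x - y) :=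
      ((contDiff_listDeriv l hφ).differentiable (by simp) _).hasFDerivAt
    have hreflect := ((hdiff.comp y ((hasFDerivAt_id y).const_sub x)).const_mul
      ((-1 : ℝ) ^ l.length)).fderiv
    simp only [Function.comp_def] at hreflect
    simp only [listDeriv, ih, hreflect, List.length_cons, pow_succ]
    simp

theorem listDeriv_convolution_left (l : List (Fin n)) (hφ : ContDiff ℝ (⊤ : ℕ∞) φ)
    (hsupp : HasCompactSupport φ) (hf : LocallyIntegrable f) :
    listDeriv l (φ ⋆[ContinuousLinearMap.lsmul ℝ ℝ, volume] f) =
      listDeriv l φ ⋆[ContinuousLinearMap.lsmul ℝ ℝ, volume] f := by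
  induction l with
  | nil => rfl
  | cons i l ih =>
    ext x
    have hψ := contDiff_listDeriv l hφ
    have hψ' := hasCompactSupport_listDeriv l hsupp
    have hderiv := (hψ'.hasFDerivAt_convolution_left (ContinuousLinearMap.lsmul ℝ ℝ)
      (hψ.of_le (by exact_mod_cast le_top)) hf x).fderiv
    simp only [listDeriv, ih, hderiv, ContinuousLinearMap.precompL, convolution_flip]
    rw [convolution_precompR_apply _ hf (hψ'.fderiv ℝ) (hψ.continuous_fderiv (by simp)),
      convolution_flip]

theorem IsWeakDeriv.mderiv_convolution {α : Fin n → ℕ} {g : Euc n → ℝ} (hfg : IsWeakDeriv α f g)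
    (hφ : ContDiff ℝ (⊤ : ℕ∞) φ) (hsupp : HasCompactSupport φ) (hf : LocallyIntegrable f) :
    mderiv α (φ ⋆[ContinuousLinearMap.lsmul ℝ ℝ, volume] f) =
      φ ⋆[ContinuousLinearMap.lsmul ℝ ℝ, volume] g := by
  ext x
  have hreflect : mderiv α (fun y => φ (x - y)) =
      fun y => (-1 : ℝ) ^ mdeg α * mderiv α φ (x - y) := by
    rw [← length_multiIndexList]
    exact listDeriv_comp_const_sub _ hφ x
  have hweak := hfg (fun y => φ (x - y)) (by fun_prop)
    (hsupp.comp_homeomorph (Homeomorph.subLeft x))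
  simp_rw [hreflect, mul_left_comm (f _), integral_const_mul] at hweak
  calc mderiv α (φ ⋆[ContinuousLinearMap.lsmul ℝ ℝ, volume] f) x
      = ∫ y, f y * mderiv α φ (x - y) := by
        rw [mderiv, ← multiIndexList, listDeriv_convolution_left _ hφ hsupp hf,
          convolution_lsmul_swap]
        exact integral_congr_ae (.of_forall fun y => mul_comm _ _)
    _ = ∫ y, g y * φ (x - y) := mul_left_cancel₀ (by simp) hweak
    _ = (φ ⋆[ContinuousLinearMap.lsmul ℝ ℝ, volume] g) x := by
        simp_rw [convolution_lsmul_swap, smul_eq_mul, mul_comm]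

end Mollification

section Sobolev

variable {n k : ℕ}

theorem exists_enorm_le_mul_sum_mderiv_lconvolution_rieszKernel (n : ℕ) [NeZero n] (hk : 0 < k) :
    ∃ C : ℝ≥0, ∀ u : Euc n → ℝ, ContDiff ℝ (⊤ : ℕ∞) u → ∀ x, ‖u x‖ₑ ≤
      C * ((fun y => ∑ α ∈ multiIndices n k, ‖mderiv α u y‖ₑ) ⋆ₗ rieszKernel (Euc n) k) x := by
  obtain ⟨C, hC⟩ := exists_enorm_le_mul_lconvolution_rieszKernel (F := ℝ)
    (volume : Measure (Euc n)) hk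
  set N : ℝ≥0 := ∑ j ∈ Finset.range (k + 1), (n : ℝ≥0) ^ j with hN
  refine ⟨C * N, fun u hu x => (hC u (hu.of_le (by exact_mod_cast le_top)) x).trans ?_⟩
  rw [ENNReal.coe_mul, mul_assoc, ← const_mul_lconvolution (c := (N : ℝ≥0∞)) ENNReal.coe_ne_top]
  gcongr
  refine lconvolution_le_lconvolution_left (.of_forall fun y => ?_) x
  simp only [hN, ENNReal.ofNNReal_finsetSum, Finset.sum_mul, ENNReal.coe_pow, ENNReal.coe_natCast]
  exact Finset.sum_le_sum fun j hj =>
    enorm_iteratedFDeriv_le_sum_mderiv (Finset.mem_range_succ_iff.1 hj) hu y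

variable {f : Euc n → ℝ} {D : (Fin n → ℕ) → Euc n → ℝ}

theorem sum_enorm_mderiv_normed_convolution_le (φ : ContDiffBump (0 : Euc n))
    (hf : LocallyIntegrable f) (hD : ∀ α, mdeg α ≤ k → IsWeakDeriv α f (D α)) (x : Euc n) :
    ∑ α ∈ multiIndices n k,
        ‖mderiv α (φ.normed volume ⋆[ContinuousLinearMap.lsmul ℝ ℝ, volume] f) x‖ₑ ≤
      ((fun y => ENNReal.ofReal (φ.normed volume y)) ⋆ₗ
        fun y => ∑ α ∈ multiIndices n k, ‖D α y‖ₑ) x := by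
  rw [lconvolution_comm]
  refine (Finset.sum_le_sum fun α hα => ?_).trans (sum_lconvolution_le _ _ x)
  rw [(hD α (mem_multiIndices.1 hα)).mderiv_convolution φ.contDiff_normed φ.hasCompactSupport_normed
    hf, lconvolution_comm]
  refine (enorm_convolution_lsmul_le _ _ x).trans_eq ?_
  simp_rw [Real.enorm_of_nonneg (φ.nonneg_normed _)]

theorem exists_ae_enorm_le_mul_sum_lconvolution_rieszKernel (n : ℕ) [NeZero n] (hk : 0 < k)
    (hkn : k ≤ n) :
    ∃ C : ℝ≥0, ∀ (f : Euc n → ℝ) (D : (Fin n → ℕ) → Euc n → ℝ), LocallyIntegrable f →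
      (∀ α, mdeg α ≤ k → AEMeasurable (D α) ∧ IsWeakDeriv α f (D α)) →
      ∀ᵐ x, ‖f x‖ₑ ≤
        C * ((fun y => ∑ α ∈ multiIndices n k, ‖D α y‖ₑ) ⋆ₗ rieszKernel (Euc n) k) x := by
  obtain ⟨C, hC⟩ := exists_enorm_le_mul_sum_mderiv_lconvolution_rieszKernel n hk
  refine ⟨C * ((2 : ℝ≥0) ^ n * rieszA1Const n k), fun f D hf hD => ?_⟩
  let φ (j : ℕ) : ContDiffBump (0 : Euc n) :=
    { rIn := 1 / (j + 1)
      rOut := 2 * (1 / (j + 1))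
      rIn_pos := by positivity
      rIn_lt_rOut := lt_two_mul_self (by positivity) }
  have hφ : Tendsto (fun j => (φ j).rOut) atTop (𝓝 0) := by
    simpa [φ] using (tendsto_one_div_add_atTop_nhds_zero_nat (𝕜 := ℝ)).const_mul 2
  have hae := ContDiffBump.ae_convolution_tendsto_right_of_locallyIntegrable (μ := volume) hφ
    (.of_forall fun _ => le_rfl) hf
  have hmeas : AEMeasurable fun y => ∑ α ∈ multiIndices n k, ‖D α y‖ₑ :=
    Finset.aemeasurable_fun_sum _ fun α hα => (hD α (mem_multiIndices.1 hα)).1.enorm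
  filter_upwards [hae] with x hx
  refine le_of_tendsto' hx.enorm fun j => ?_
  have hsmooth := ((φ j).hasCompactSupport_normed (μ := volume)).contDiff_convolution_left
    (ContinuousLinearMap.lsmul ℝ ℝ) (n := (⊤ : ℕ∞)) (φ j).contDiff_normed hf
  have hφmeas : Measurable fun y => ENNReal.ofReal ((φ j).normed volume y) :=
    (φ j).continuous_normed.measurable.ennreal_ofReal
  refine (hC _ hsmooth x).trans ?_
  rw [ENNReal.coe_mul, mul_assoc]
  gcongr
  refine (lconvolution_le_lconvolution_left (.of_forall fun y =>
    sum_enorm_mderiv_normed_convolution_le (φ j) hf (fun α hα => (hD α hα).2) y) x).trans ?_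
  rw [← lconvolution_assoc₀ hφmeas.aemeasurable hmeas (by fun_prop)]
  refine (normed_lconvolution_lconvolution_rieszKernel_le volume (a := k) (by positivity)
    (by simpa using hkn) (φ j) le_rfl hmeas x).trans_eq ?_
  rw [finrank_euclideanSpace_fin, ENNReal.coe_mul, mul_assoc, ENNReal.ofReal_pow (by norm_num)]
  norm_num

end Sobolev

section RieszCapacity

theorem lintegral_sum_rpow_le {ι X : Type*} [MeasurableSpace X] {μ : Measure X} (s : Finset ι)
    {g : ι → X → ℝ≥0∞} (hg : ∀ i ∈ s, AEMeasurable (g i) μ) {p : ℝ} (hp : 1 ≤ p) :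
    ∫⁻ x, (∑ i ∈ s, g i x) ^ p ∂μ ≤ (s.card : ℝ≥0∞) ^ (p - 1) * ∑ i ∈ s, ∫⁻ x, g i x ^ p ∂μ := by
  rw [← lintegral_finsetSum' _ fun i hi => (hg i hi).pow_const p,
    ← lintegral_const_mul' _ _ (ENNReal.rpow_ne_top_of_nonneg (by linarith) (by simp))]
  exact lintegral_mono fun x => ENNReal.rpow_sum_le_const_mul_sum_rpow _ _ hp

variable {n : ℕ} {a : ℝ}

theorem maxFn_le_mul_lconvolution_rieszKernel [NeZero n] (ha : 0 < a) (han : a ≤ n)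
    {g h : Euc n → ℝ≥0∞} {c : ℝ≥0∞} (hc : c ≠ ∞) (hh : AEMeasurable h)
    (hgh : ∀ᵐ x, g x ≤ c * (h ⋆ₗ rieszKernel (Euc n) a) x) (x : Euc n) :
    maxFn g x ≤ c * (rieszA1Const n a * (h ⋆ₗ rieszKernel (Euc n) a) x) := by
  refine iSup₂_le fun r hr => ?_
  calc (volume (ball x r))⁻¹ * ∫⁻ y in ball x r, g y
      ≤ (volume (ball x r))⁻¹ * ∫⁻ y in ball x r, c * (h ⋆ₗ rieszKernel (Euc n) a) y :=
        mul_le_mul_right (lintegral_mono_ae (ae_restrict_of_ae hgh)) _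
    _ = c * (ballAverageKernel volume r ⋆ₗ h ⋆ₗ rieszKernel (Euc n) a) x := by
        rw [ballAverageKernel_lconvolution volume hr, lintegral_const_mul' _ _ hc, mul_left_comm]
    _ ≤ c * (rieszA1Const n a * (h ⋆ₗ rieszKernel (Euc n) a) x) := by
        have hA := ballAverageKernel_lconvolution_lconvolution_rieszKernel_le volume ha
          (by rwa [finrank_euclideanSpace_fin]) hr hh x
        rw [finrank_euclideanSpace_fin] at hA
        gcongr

theorem rieszGamma_pos (ha : 0 < a) (han : a < n) : 0 < rieszGamma n a := by
  have hnum : 0 < Real.Gamma (a / 2) := Real.Gamma_pos_of_pos (by positivity)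
  have hden : 0 < Real.Gamma ((n - a) / 2) := Real.Gamma_pos_of_pos (by linarith)
  exact div_pos (mul_pos (by positivity) hnum) hden

theorem lconvolution_rieszKernel_eq_mul_rieszPot (ha : 0 < a) (han : a < n) (h : Euc n → ℝ)
    (x : Euc n) :
    ((fun y => ENNReal.ofReal (h y)) ⋆ₗ rieszKernel (Euc n) a) x =
      ENNReal.ofReal (rieszGamma n a) * rieszPot a h x := by
  rw [rieszPot, ENNReal.mul_inv_cancel_left (by simpa using rieszGamma_pos ha han)
    ENNReal.ofReal_ne_top, lconvolution_def]
  simp_rw [rieszKernel, finrank_euclideanSpace_fin, neg_add_eq_sub]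

theorem rieszPot_const_mul {c : ℝ} (hc : 0 ≤ c) (h : Euc n → ℝ) (x : Euc n) :
    rieszPot a (fun y => c * h y) x = ENNReal.ofReal c * rieszPot a h x := by
  simp_rw [rieszPot, ENNReal.ofReal_mul hc, mul_assoc]
  rw [lintegral_const_mul' _ _ ENNReal.ofReal_ne_top, mul_left_comm]

theorem rieszCap_le_of_forall_le_mul_rieszPot {p : ℝ} (hp : 0 ≤ p) {S : Set (Euc n)}
    {h : Euc n → ℝ} (hmem : MemLp h (ENNReal.ofReal p)) (hh : ∀ y, 0 ≤ h y) {C lam : ℝ}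
    (hC : 0 ≤ C) (hlam : 0 < lam)
    (hS : ∀ x ∈ S, ENNReal.ofReal lam ≤ ENNReal.ofReal C * rieszPot a h x) :
    rieszCap a p S ≤ ENNReal.ofReal (C ^ p / lam ^ p) * ∫⁻ y, ENNReal.ofReal (h y) ^ p := by
  have hc : 0 ≤ C / lam := by positivity
  have htest : ∀ x ∈ S, 1 ≤ rieszPot a (fun y => C / lam * h y) x := fun x hx => by
    rw [rieszPot_const_mul hc, ENNReal.ofReal_div_of_pos hlam, ENNReal.mul_comm_div,
      ← mul_div_assoc, ENNReal.le_div_iff_mul_le (.inl (by simpa)) (.inl ENNReal.ofReal_ne_top),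
      one_mul]
    exact hS x hx
  refine (iInf₂_le _ ⟨hmem.const_mul (C / lam), fun x => mul_nonneg hc (hh x), htest⟩).trans_eq ?_
  simp_rw [ENNReal.ofReal_mul hc, ENNReal.mul_rpow_of_nonneg _ _ hp]
  rw [lintegral_const_mul' _ _ (ENNReal.rpow_ne_top_of_nonneg hp ENNReal.ofReal_ne_top),
    ENNReal.ofReal_rpow_of_nonneg hc hp, Real.div_rpow hC hlam.le]

theorem rieszCap_le_of_forall_le_mul_rieszPot_sum_abs {κ : Type*} {s : Finset κ} {p : ℝ}
    (hp : 1 ≤ p) {S : Set (Euc n)} {f : κ → Euc n → ℝ}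
    (hf : ∀ q ∈ s, MemLp (f q) (ENNReal.ofReal p)) {C lam : ℝ} (hC : 0 ≤ C) (hlam : 0 < lam)
    (hS : ∀ x ∈ S, ENNReal.ofReal lam ≤
      ENNReal.ofReal C * rieszPot a (fun y => ∑ q ∈ s, |f q y|) x) :
    rieszCap a p S ≤ ENNReal.ofReal (C ^ p * (s.card : ℝ) ^ (p - 1) / lam ^ p) *
      ∑ q ∈ s, ∫⁻ y, ENNReal.ofReal |f q y| ^ p := by
  calc rieszCap a p S
      ≤ ENNReal.ofReal (C ^ p / lam ^ p) * ∫⁻ y, ENNReal.ofReal (∑ q ∈ s, |f q y|) ^ p :=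
        rieszCap_le_of_forall_le_mul_rieszPot (by linarith)
          (memLp_finsetSum _ fun q hq => (hf q hq).norm) (fun y => by positivity) hC hlam hS
    _ ≤ ENNReal.ofReal (C ^ p / lam ^ p) *
          ((s.card : ℝ≥0∞) ^ (p - 1) * ∑ q ∈ s, ∫⁻ y, ENNReal.ofReal |f q y| ^ p) := by
        simp_rw [ENNReal.ofReal_sum_of_nonneg fun _ _ => abs_nonneg _]
        gcongr
        exact lintegral_sum_rpow_le s (fun q hq =>
          (hf q hq).aestronglyMeasurable.aemeasurable.abs.ennreal_ofReal) hp
    _ = ENNReal.ofReal (C ^ p * (s.card : ℝ) ^ (p - 1) / lam ^ p) *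
          ∑ q ∈ s, ∫⁻ y, ENNReal.ofReal |f q y| ^ p := by
        rw [← mul_assoc, mul_div_right_comm, ENNReal.ofReal_mul (by positivity),
          ← ENNReal.ofReal_rpow_of_nonneg (by positivity) (by linarith), ENNReal.ofReal_natCast]

end RieszCapacity

section VectorValued

theorem sqrt_sum_sq_le_sum_abs {ι : Type*} (s : Finset ι) (v : ι → ℝ) :
    √(∑ i ∈ s, v i ^ 2) ≤ ∑ i ∈ s, |v i| := by
  refine Real.sqrt_le_iff.2 ⟨by positivity, ?_⟩
  simp_rw [← sq_abs (v _)]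
  exact Finset.sum_sq_le_sq_sum_of_nonneg fun i _ => abs_nonneg _

variable {n k : ℕ}

theorem exists_ae_ofReal_sqrt_le_mul_lconvolution_rieszKernel (n : ℕ) [NeZero n] (ι : Type*)
    [Fintype ι] (hk : 0 < k) (hkn : k ≤ n) :
    ∃ C : ℝ≥0, ∀ (Fs : ι → Euc n → ℝ) (DF : ι → (Fin n → ℕ) → Euc n → ℝ),
      (∀ i, LocallyIntegrable (Fs i)) →
      (∀ i α, mdeg α ≤ k → AEMeasurable (DF i α) ∧ IsWeakDeriv α (Fs i) (DF i α)) →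
      ∀ᵐ x, ENNReal.ofReal √(∑ i, Fs i x ^ 2) ≤
        C * ((fun y => ENNReal.ofReal (∑ q ∈ Finset.univ ×ˢ multiIndices n k, |DF q.1 q.2 y|)) ⋆ₗ
          rieszKernel (Euc n) k) x := by
  obtain ⟨C, hC⟩ := exists_ae_enorm_le_mul_sum_lconvolution_rieszKernel n hk hkn
  refine ⟨C, fun Fs DF hFs hDF => ?_⟩
  have hsum (y : Euc n) :
      ENNReal.ofReal (∑ q ∈ Finset.univ ×ˢ multiIndices n k, |DF q.1 q.2 y|) =
        ∑ i, ∑ α ∈ multiIndices n k, ‖DF i α y‖ₑ := by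
    rw [ENNReal.ofReal_sum_of_nonneg fun _ _ => abs_nonneg _, Finset.sum_product]
    simp_rw [Real.enorm_eq_ofReal_abs]
  filter_upwards [ae_all_iff.2 fun i => hC (Fs i) (DF i) (hFs i) (hDF i)] with x hx
  calc ENNReal.ofReal √(∑ i, Fs i x ^ 2)
      ≤ ∑ i, ‖Fs i x‖ₑ := by
        simp_rw [Real.enorm_eq_ofReal_abs]
        rw [← ENNReal.ofReal_sum_of_nonneg fun _ _ => abs_nonneg _]
        exact ENNReal.ofReal_le_ofReal (sqrt_sum_sq_le_sum_abs _ _)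
    _ ≤ C * ∑ i, ((fun y => ∑ α ∈ multiIndices n k, ‖DF i α y‖ₑ) ⋆ₗ rieszKernel (Euc n) k) x :=
        (Finset.sum_le_sum fun i _ => hx i).trans_eq (Finset.mul_sum _ _ _).symm
    _ ≤ C * ((fun y => ENNReal.ofReal (∑ q ∈ Finset.univ ×ˢ multiIndices n k, |DF q.1 q.2 y|)) ⋆ₗ
          rieszKernel (Euc n) k) x := by
        simp_rw [hsum]
        exact mul_le_mul_right (sum_lconvolution_le _ _ x) _

theorem exists_maxFn_le_mul_rieszPot (n : ℕ) (ι : Type*) [Fintype ι] (hk : 0 < k) (hkn : k < n) :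
    ∃ C : ℝ, 0 ≤ C ∧ ∀ (Fs : ι → Euc n → ℝ) (DF : ι → (Fin n → ℕ) → Euc n → ℝ),
      (∀ i, LocallyIntegrable (Fs i)) →
      (∀ i α, mdeg α ≤ k → AEMeasurable (DF i α) ∧ IsWeakDeriv α (Fs i) (DF i α)) →
      ∀ x, maxFn (fun y => ENNReal.ofReal √(∑ i, Fs i y ^ 2)) x ≤ ENNReal.ofReal C *
        rieszPot k (fun y => ∑ q ∈ Finset.univ ×ˢ multiIndices n k, |DF q.1 q.2 y|) x := by
  have : NeZero n := ⟨by lia⟩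
  have hk' : (0 : ℝ) < k := by exact_mod_cast hk
  have hkn' : (k : ℝ) < n := by exact_mod_cast hkn
  obtain ⟨C, hC⟩ := exists_ae_ofReal_sqrt_le_mul_lconvolution_rieszKernel n ι hk hkn.le
  refine ⟨C * rieszA1Const n k * rieszGamma n k,
    mul_nonneg (by positivity) (rieszGamma_pos hk' hkn').le, fun Fs DF hFs hDF x => ?_⟩
  have hmeas : AEMeasurable fun y => ∑ q ∈ Finset.univ ×ˢ multiIndices n k, |DF q.1 q.2 y| :=
    Finset.aemeasurable_fun_sum _ fun q hq =>
      (hDF q.1 q.2 (mem_multiIndices.1 (Finset.mem_product.1 hq).2)).1.norm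
  refine (maxFn_le_mul_lconvolution_rieszKernel hk' hkn'.le ENNReal.coe_ne_top hmeas.ennreal_ofReal
    (hC Fs DF hFs hDF) x).trans_eq ?_
  rw [lconvolution_rieszKernel_eq_mul_rieszPot hk' hkn', ENNReal.ofReal_mul (by positivity),
    ENNReal.ofReal_mul (by positivity), ENNReal.ofReal_coe_nnreal, ENNReal.ofReal_coe_nnreal,
    mul_assoc, mul_assoc]

theorem rieszCap_maximal_weak_type_vector_general {ι : Type*} [Fintype ι] {p : ℝ}
    (hk : 0 < k) (hp : 1 ≤ p) (hkn : k < n) :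
    ∃ C : ℝ, 0 < C ∧
      ∀ (Fs : ι → Euc n → ℝ) (DF : ι → (Fin n → ℕ) → Euc n → ℝ),
        (∀ i, DF i 0 = Fs i) →
        (∀ i (α : Fin n → ℕ), mdeg α ≤ k →
          MemLp (DF i α) (ENNReal.ofReal p) volume ∧ IsWeakDeriv α (Fs i) (DF i α)) →
      ∀ lam : ℝ, 0 < lam →
        rieszCap (k : ℝ) p
          {x : Euc n | ENNReal.ofReal lam <
            maxFn (fun y => ENNReal.ofReal (Real.sqrt (∑ i, Fs i y ^ 2))) x} ≤
        ENNReal.ofReal (C / lam ^ p) *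
          ∑ i : ι, ∑ β : Fin n → Fin (k + 1),
            if mdeg (fun j => (β j : ℕ)) ≤ k then
              ∫⁻ y, ENNReal.ofReal |DF i (fun j => (β j : ℕ)) y| ^ p
            else 0 := by
  obtain ⟨C, hC0, hC⟩ := exists_maxFn_le_mul_rieszPot n ι hk hkn
  set s : Finset (ι × (Fin n → ℕ)) := Finset.univ ×ˢ multiIndices n k with hs
  refine ⟨C ^ p * (s.card : ℝ) ^ (p - 1) + 1, by positivity, fun Fs DF hDF₀ hDF lam hlam => ?_⟩
  have hmem (q) (hq : q ∈ s) : MemLp (DF q.1 q.2) (ENNReal.ofReal p) :=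
    (hDF q.1 q.2 (mem_multiIndices.1 (Finset.mem_product.1 hq).2)).1
  have hloc (i : ι) : LocallyIntegrable (Fs i) := by
    rw [← hDF₀ i]
    exact (hDF i 0 (by simp [mdeg])).1.locallyIntegrable (by simpa using hp)
  have hmax := hC Fs DF hloc fun i α hα =>
    ⟨(hDF i α hα).1.aestronglyMeasurable.aemeasurable, (hDF i α hα).2⟩
  refine (rieszCap_le_of_forall_le_mul_rieszPot_sum_abs hp hmem hC0 hlam fun x hx =>
    (le_of_lt hx).trans (hmax x)).trans ?_
  rw [hs, Finset.sum_product]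
  simp_rw [sum_multiIndices]
  gcongr
  exact le_add_of_nonneg_right zero_le_one

end VectorValued

/-- weak-type capacitary inequality for the maximal function of a
vector-valued Sobolev mapping. -/
theorem rieszCap_maximal_weak_type_vector {n k m : ℕ} {p : ℝ}
    (hk : 0 < k) (hp : 1 ≤ p) (hkpn : (k : ℝ) * p < n) :
    ∃ C : ℝ, 0 < C ∧
      ∀ (Fs : Fin m → Euc n → ℝ) (DF : Fin m → (Fin n → ℕ) → Euc n → ℝ),
        (∀ i, DF i 0 = Fs i) →
        (∀ i (α : Fin n → ℕ), mdeg α ≤ k →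
          MemLp (DF i α) (ENNReal.ofReal p) volume ∧ IsWeakDeriv α (Fs i) (DF i α)) →
      ∀ lam : ℝ, 0 < lam →
        rieszCap (k : ℝ) p
          {x : Euc n | ENNReal.ofReal lam <
            maxFn (fun y => ENNReal.ofReal (Real.sqrt (∑ i, Fs i y ^ 2))) x} ≤
        ENNReal.ofReal (C / lam ^ p) *
          ∑ i : Fin m, ∑ β : Fin n → Fin (k + 1),
            if mdeg (fun j => (β j : ℕ)) ≤ k then
              ∫⁻ y, ENNReal.ofReal |DF i (fun j => (β j : ℕ)) y| ^ p
            else 0 :=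
  rieszCap_maximal_weak_type_vector_general hk hp
    (by exact_mod_cast (le_mul_of_one_le_right k.cast_nonneg hp).trans_lt hkpn)
end
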